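/- arXiv:1905.00368 — 2 statements merged into one kernel-verified Lean document; each statement's English description precedes it below -/
import Mathlib

section
/- For all μ, ν, μ′, ν′ ∈ 𝒫_p(𝒳_1 × 𝒫_p(𝒳_2)) one has |CW̄_p(μ, ν) − CW̄_p(μ′, ν′)| ≤ AW̄_p(μ, μ′) + AW̄_p(ν, ν′); in particular CW̄_p is uniformly continuous on 𝒫_p(𝒳_1 × 𝒫_p(𝒳_2))² with respect to AW̄_p. -/
open MeasureTheory ProbabilityTheory ENNReal Filter Topology

noncomputable section

namespace AWPaper

/-! ### Generic constructions -/

variable {α β : Type*}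

/-- The set of couplings of two measures. -/
def Cpl [MeasurableSpace α] [MeasurableSpace β] (μ : Measure α) (ν : Measure β) :
    Set (Measure (α × β)) :=
  {π | π.map Prod.fst = μ ∧ π.map Prod.snd = ν}

/-- The `p`-Wasserstein distance (with values in `ℝ≥0∞`) associated to an
`ℝ≥0∞`-valued distance function `d`. -/
def Wp [MeasurableSpace α] (p : ℝ) (d : α → α → ℝ≥0∞) (μ ν : Measure α) : ℝ≥0∞ :=
  ⨅ π ∈ Cpl μ ν, (∫⁻ z, d z.1 z.2 ^ p ∂π) ^ (1 / p)

/-- The topology generated by the open balls of an `ℝ≥0∞`-valued distance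
function.  For a genuine metric this is the metric topology. -/
def ballTop (d : α → α → ℝ≥0∞) : TopologicalSpace α :=
  TopologicalSpace.generateFrom {s | ∃ x ε, 0 < ε ∧ s = {y | d x y < ε}}

/-- The product distance of two `ℝ≥0∞`-valued distances, `ℓ^p`-style. -/
def prodDist (p : ℝ) (d₁ : α → α → ℝ≥0∞) (d₂ : β → β → ℝ≥0∞) :
    α × β → α × β → ℝ≥0∞ :=
  fun u v => (d₁ u.1 v.1 ^ p + d₂ u.2 v.2 ^ p) ^ (1 / p)

/-- Membership in the `p`-Wasserstein space: a probability measure with finite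
`p`-th moment (w.r.t. the distance function `d`). -/
def MemPp [MeasurableSpace α] (p : ℝ) (d : α → α → ℝ≥0∞) (μ : Measure α) : Prop :=
  IsProbabilityMeasure μ ∧ ∃ x₀, ∫⁻ x, d x₀ x ^ p ∂μ ≠ ∞

/-- The weak topology on measures induced by integration of bounded continuous
functions, for a given topology `τ` on the base space. -/
def weakTop [MeasurableSpace α] (τ : TopologicalSpace α) : TopologicalSpace (Measure α) :=
  TopologicalSpace.induced
    (fun μ => fun f : @BoundedContinuousFunction α ℝ τ _ => ∫ x, f x ∂μ)
    Pi.topologicalSpace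

/-- The product topology built from two explicitly given topologies. -/
def prodTop (τ₁ : TopologicalSpace α) (τ₂ : TopologicalSpace β) : TopologicalSpace (α × β) :=
  TopologicalSpace.induced Prod.fst τ₁ ⊓ TopologicalSpace.induced Prod.snd τ₂

/-- An everywhere-defined version of the disintegration kernel: it agrees with
`Measure.condKernel` on finite measures. -/
def condK [MeasurableSpace α] [MeasurableSpace β] [StandardBorelSpace β] [Nonempty β]
    (ρ : Measure (α × β)) : Kernel α β :=
  letI := Classical.dec (IsFiniteMeasure ρ)
  if h : IsFiniteMeasure ρ then @Measure.condKernel α β _ _ _ _ ρ h else 0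

/-- The disintegration map `𝒫(A × B) → 𝒫(A × 𝒫(B))`. -/
def disint [MeasurableSpace α] [MeasurableSpace β] [StandardBorelSpace β] [Nonempty β]
    (μ : Measure (α × β)) : Measure (α × Measure β) :=
  μ.map (fun z => (z.1, condK μ z.1))

/-- The intensity ("und") map `𝒫(A × 𝒫(B)) → 𝒫(A × B)`. -/
def und [MeasurableSpace α] [MeasurableSpace β] (μ : Measure (α × Measure β)) :
    Measure (α × β) :=
  μ.bind (fun z => (Measure.dirac z.1).prod z.2)

/-! ### Path spaces -/

variable {X : Type*} [MeasurableSpace X]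

/-- The path-space distance `ρ̄((x_t),(y_t)) = (∑ ρ(x_t,y_t)^p)^{1/p}`. -/
def pathDist (p : ℝ) (d : X → X → ℝ≥0∞) {N : ℕ} :
    (Fin N → X) → (Fin N → X) → ℝ≥0∞ :=
  fun x y => (∑ t, d (x t) (y t) ^ p) ^ (1 / p)

/-- The first `t` coordinates of a path. -/
def restr {N : ℕ} (t : ℕ) (h : t ≤ N) (x : Fin N → X) : Fin t → X :=
  fun s => x (Fin.castLE h s)

/-- The last `N - t` coordinates of a path. -/
def tailr {N : ℕ} (t : ℕ) (h : t ≤ N) (x : Fin N → X) : Fin (N - t) → X :=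
  fun s => x ⟨t + s.1, by have := s.2; omega⟩

/-- A coupling `π` of two path measures is causal: for every `t` and Borel
`A ⊆ 𝒳^t`, `π((Y_1,…,Y_t) ∈ A | X) = π((Y_1,…,Y_t) ∈ A | X_1,…,X_t)` a.s. -/
def Causal {N : ℕ} (π : Measure ((Fin N → X) × (Fin N → X))) : Prop :=
  ∀ (t : ℕ) (h : t ≤ N) (A : Set (Fin t → X)), MeasurableSet A →
    (π[fun z => A.indicator (fun _ => (1 : ℝ)) (restr t h z.2) |
        MeasurableSpace.comap Prod.fst inferInstance])
      =ᵐ[π]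
    (π[fun z => A.indicator (fun _ => (1 : ℝ)) (restr t h z.2) |
        MeasurableSpace.comap (fun z => restr t h z.1) inferInstance])

/-- Bicausal couplings. -/
def Bicausal {N : ℕ} (π : Measure ((Fin N → X) × (Fin N → X))) : Prop :=
  Causal π ∧ Causal (π.map Prod.swap)

/-- The causal Wasserstein "distance" `CW_p`. -/
def CW (p : ℝ) (d : X → X → ℝ≥0∞) {N : ℕ} (μ ν : Measure (Fin N → X)) : ℝ≥0∞ :=
  ⨅ π ∈ {π ∈ Cpl μ ν | Causal π}, (∫⁻ z, pathDist p d z.1 z.2 ^ p ∂π) ^ (1 / p)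

/-- The symmetrized causal Wasserstein distance `SCW_p`. -/
def SCW (p : ℝ) (d : X → X → ℝ≥0∞) {N : ℕ} (μ ν : Measure (Fin N → X)) : ℝ≥0∞ :=
  max (CW p d μ ν) (CW p d ν μ)

/-- The adapted (nested, bicausal) Wasserstein distance `AW_p`. -/
def AW (p : ℝ) (d : X → X → ℝ≥0∞) {N : ℕ} (μ ν : Measure (Fin N → X)) : ℝ≥0∞ :=
  ⨅ π ∈ {π ∈ Cpl μ ν | Bicausal π}, (∫⁻ z, pathDist p d z.1 z.2 ^ p ∂π) ^ (1 / p)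

/-! ### Nested spaces (Pflug's nested distributions / Vershik's iterated spaces) -/

/-- A measurable space together with an `ℝ≥0∞`-valued distance. -/
structure QMS : Type 1 where
  carrier : Type
  inst : MeasurableSpace carrier
  dist : carrier → carrier → ℝ≥0∞

/-- The nested sequence of spaces: `nest X _ d p 0 = 𝒳` (this is `𝒳_N`), and
`nest X _ d p (k+1) = 𝒳 × 𝒫(nest X _ d p k)` with the nested distance
`D = (ρ^p + 𝒲_p^p)^{1/p}`.  Thus `𝒳_1` (for `N = k+1` time points) is
`nest X _ d p k`. -/
def nest (X : Type) (mX : MeasurableSpace X) (d : X → X → ℝ≥0∞) (p : ℝ) : ℕ → QMS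
  | 0 => ⟨X, mX, d⟩
  | (k + 1) =>
    let Q := nest X mX d p k
    ⟨X × @Measure Q.carrier Q.inst,
      @Prod.instMeasurableSpace _ _ mX (@Measure.instMeasurableSpace _ Q.inst),
      fun a b => (d a.1 b.1 ^ p + (@Wp _ Q.inst p Q.dist a.2 b.2) ^ p) ^ (1 / p)⟩

section NMapSec

variable (Y : Type) [mY : MeasurableSpace Y] [TopologicalSpace Y] [PolishSpace Y]
  [BorelSpace Y] [Nonempty Y]

/-- The map `𝒩` sending the law of a process with `k+1` time steps to the
corresponding nested distribution, via iterated regular conditional laws. -/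
def NMap (d : Y → Y → ℝ≥0∞) (p : ℝ) :
    ∀ k : ℕ, Measure (Fin (k + 1) → Y) →
      @Measure (nest Y mY d p k).carrier (nest Y mY d p k).inst
  | 0, μ =>
    letI : MeasurableSpace (nest Y mY d p 0).carrier := (nest Y mY d p 0).inst
    μ.map (fun x => x 0)
  | (k + 1), μ =>
    letI : MeasurableSpace (nest Y mY d p k).carrier := (nest Y mY d p k).inst
    letI : MeasurableSpace (nest Y mY d p (k + 1)).carrier := (nest Y mY d p (k + 1)).inst
    (μ.map (fun x => x 0)).map
      (fun x₀ => (x₀, NMap d p k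
        ((condK (μ.map (fun x => (x 0, fun s : Fin (k + 1) => x s.succ)))) x₀)))

end NMapSec

section PathStructures

variable {Y : Type*} [mY : MeasurableSpace Y]

/-- A process `L` is adapted: `L t` depends only on the first `t+1` coordinates. -/
def AdaptedProc {N : ℕ} (L : Fin N → (Fin N → Y) → ℝ) : Prop :=
  ∀ (t : Fin N) (x y : Fin N → Y), (∀ s : Fin N, s ≤ t → x s = y s) → L t x = L t y

/-- `τ` is a stopping time of the canonical filtration on the path space. -/
def IsStopTime {N : ℕ} (τ : (Fin N → Y) → Fin N) : Prop :=
  ∀ t : Fin N,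
    MeasurableSet[MeasurableSpace.comap (restr (X := Y) (t.1 + 1) t.2) inferInstance]
      {x | τ x = t}

/-- The optimal stopping value `v^L(μ)`. -/
def stopVal {N : ℕ} (L : Fin N → (Fin N → Y) → ℝ) (μ : Measure (Fin N → Y)) : ℝ :=
  ⨅ τ : {τ : (Fin N → Y) → Fin N // IsStopTime τ}, ∫ x, L (τ.1 x) x ∂μ

variable [TopologicalSpace Y]

/-- `AC(X̄)`: adapted processes which are continuous and bounded. -/
def ACbdd {N : ℕ} (L : Fin N → (Fin N → Y) → ℝ) : Prop :=
  (∀ t, Continuous (L t)) ∧ AdaptedProc L ∧ ∃ C : ℝ, ∀ t x, |L t x| ≤ C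

/-- `AC_p(X̄)`: adapted continuous processes of growth of order `p`. -/
def ACp (p : ℝ) (d : Y → Y → ℝ≥0∞) {N : ℕ} (L : Fin N → (Fin N → Y) → ℝ) : Prop :=
  (∀ t, Continuous (L t)) ∧ AdaptedProc L ∧
    ∃ (C : ℝ) (x₀ : Fin N → Y), ∀ t x, |L t x| ≤ C * (1 + ((pathDist p d x₀ x) ^ p).toReal)

/-- The optimal stopping topology (weak version, bounded continuous rewards). -/
def stopTopW (N : ℕ) : TopologicalSpace (Measure (Fin N → Y)) :=
  ⨅ L : {L : Fin N → (Fin N → Y) → ℝ // ACbdd L},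
    TopologicalSpace.induced (stopVal L.1) inferInstance

/-- The `𝒲_p`-optimal stopping topology. -/
def stopTopWp (p : ℝ) (d : Y → Y → ℝ≥0∞) (N : ℕ) :
    TopologicalSpace (Measure (Fin N → Y)) :=
  ⨅ L : {L : Fin N → (Fin N → Y) → ℝ // ACp p d L},
    TopologicalSpace.induced (stopVal L.1) inferInstance

variable [PolishSpace Y] [BorelSpace Y] [Nonempty Y]

/-- Hellwig's map `I_t`, sending `μ` to the joint law of the first `t`
coordinates together with the conditional law of the remaining coordinates. -/
def infoMap (N t : ℕ) (h : t ≤ N) (μ : Measure (Fin N → Y)) :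
    Measure ((Fin t → Y) × Measure (Fin (N - t) → Y)) :=
  μ.map (fun x => (restr t h x,
    condK (μ.map (fun y => (restr t h y, tailr t h y))) (restr t h x)))

/-- Hellwig's information topology (weak version). -/
def infoTopW (N : ℕ) : TopologicalSpace (Measure (Fin N → Y)) :=
  ⨅ (t : ℕ) (_ : 1 ≤ t) (h : t ≤ N - 1),
    TopologicalSpace.induced (infoMap N t (le_trans h (Nat.sub_le N 1)))
      (weakTop (prodTop Pi.topologicalSpace (weakTop Pi.topologicalSpace)))

/-- The `𝒲_p`-information topology. -/
def infoTopWp (p : ℝ) (d : Y → Y → ℝ≥0∞) (N : ℕ) :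
    TopologicalSpace (Measure (Fin N → Y)) :=
  ⨅ (t : ℕ) (_ : 1 ≤ t) (h : t ≤ N - 1),
    TopologicalSpace.induced (infoMap N t (le_trans h (Nat.sub_le N 1)))
      (ballTop (Wp p (prodDist p (pathDist p d) (Wp p (pathDist p d)))))

/-- Aldous' prediction process `Z_t^μ` (as a function of the path). -/
def predict (N : ℕ) (μ : Measure (Fin N → Y)) (t : ℕ) (h : t ≤ N) :
    (Fin N → Y) → Measure (Fin N → Y) :=
  fun x => condK (μ.map (fun y => (restr t h y, y))) (restr t h x)

/-- Aldous' map `E`, sending `μ` to the joint law of the path together with its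
prediction process. -/
def aldousMap (N : ℕ) (μ : Measure (Fin N → Y)) :
    Measure ((Fin N → Y) × (Fin (N + 1) → Measure (Fin N → Y))) :=
  μ.map (fun x =>
    (x, fun t : Fin (N + 1) => predict N μ t.1 (Nat.lt_succ_iff.mp t.2) x))

/-- Aldous' extended weak topology. -/
def aldousTopW (N : ℕ) : TopologicalSpace (Measure (Fin N → Y)) :=
  TopologicalSpace.induced (aldousMap N)
    (weakTop (prodTop Pi.topologicalSpace
      (@Pi.topologicalSpace (Fin (N + 1)) (fun _ => Measure (Fin N → Y))
        (fun _ => weakTop Pi.topologicalSpace))))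

/-- The extended `𝒲_p`-topology. -/
def aldousTopWp (p : ℝ) (d : Y → Y → ℝ≥0∞) (N : ℕ) :
    TopologicalSpace (Measure (Fin N → Y)) :=
  TopologicalSpace.induced (aldousMap N)
    (ballTop (Wp p (prodDist p (pathDist p d)
      (fun Z Z' : Fin (N + 1) → Measure (Fin N → Y) =>
        (∑ t, Wp p (pathDist p d) (Z t) (Z' t) ^ p) ^ (1 / p)))))

end PathStructures

/-! ### The lifted two-time-point space `𝒳₁ × 𝒫_p(𝒳₂)` -/

section Lifted

variable {A B : Type*} [MeasurableSpace A] [MeasurableSpace B]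

/-- The nested distance on `𝒳₁ × 𝒫_p(𝒳₂)`. -/
def liftDist (p : ℝ) (dA : A → A → ℝ≥0∞) (dB : B → B → ℝ≥0∞) :
    (A × Measure B) → (A × Measure B) → ℝ≥0∞ :=
  fun u v => (dA u.1 v.1 ^ p + Wp p dB u.2 v.2 ^ p) ^ (1 / p)

/-- `η` is a version of the measure-valued conditional expectation
`E_γ[X̂₂ | Y⃗]` (i.e. the barycenter of a regular conditional law of `X̂₂`
given `Y⃗ = (Y₁, Ŷ₂)`). -/
def IsCondBar (γ : Measure ((A × Measure B) × (A × Measure B)))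
    (η : (A × Measure B) × (A × Measure B) → Measure B) : Prop :=
  (∃ g : (A × Measure B) → Measure B, Measurable g ∧ ∀ z, η z = g z.2) ∧
  (∀ z, IsProbabilityMeasure (η z)) ∧
  ∀ S : Set (A × Measure B), MeasurableSet S → ∀ E : Set B, MeasurableSet E →
    ∫⁻ z in {z | z.2 ∈ S}, η z E ∂γ = ∫⁻ z in {z | z.2 ∈ S}, z.1.2 E ∂γ

/-- `AW̄_p`, the `p`-Wasserstein distance on `𝒫_p(𝒳₁ × 𝒫_p(𝒳₂))`. -/
def AWbar (p : ℝ) (dA : A → A → ℝ≥0∞) (dB : B → B → ℝ≥0∞)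
    (μ ν : Measure (A × Measure B)) : ℝ≥0∞ :=
  Wp p (liftDist p dA dB) μ ν

/-- `CW̄_p`, the lifted causal Wasserstein "distance". -/
def CWbar (p : ℝ) (dA : A → A → ℝ≥0∞) (dB : B → B → ℝ≥0∞)
    (μ ν : Measure (A × Measure B)) : ℝ≥0∞ :=
  ⨅ γ ∈ Cpl μ ν, ⨅ η ∈ {η | IsCondBar γ η},
    (∫⁻ z, (dA z.1.1 z.2.1 ^ p + Wp p dB (η z) z.2.2 ^ p) ∂γ) ^ (1 / p)

/-- `SCW̄_p`, the symmetrization of `CW̄_p`. -/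
def SCWbar (p : ℝ) (dA : A → A → ℝ≥0∞) (dB : B → B → ℝ≥0∞)
    (μ ν : Measure (A × Measure B)) : ℝ≥0∞ :=
  max (CWbar p dA dB μ ν) (CWbar p dA dB ν μ)

/-- Membership in `𝒫_p(𝒳₁ × 𝒫_p(𝒳₂))`: a probability measure, concentrated on
`𝒳₁ × 𝒫_p(𝒳₂)`, with finite `p`-th moment for the nested distance. -/
def MemPpLift (p : ℝ) (dA : A → A → ℝ≥0∞) (dB : B → B → ℝ≥0∞)
    (μ : Measure (A × Measure B)) : Prop :=
  IsProbabilityMeasure μ ∧ (∀ᵐ z ∂μ, MemPp p dB z.2) ∧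
    ∃ z₀ : A × Measure B, MemPp p dB z₀.2 ∧ ∫⁻ z, liftDist p dA dB z₀ z ^ p ∂μ ≠ ∞

/-- Two-time-point causality: given a coupling `π` of measures on products
`A₁ × B₁` and `A₂ × B₂`, the conditional law of `Y₁` given `X = (X₁, X₂)`
coincides with the conditional law of `Y₁` given `X₁`. -/
def Causal2 {A₁ B₁ A₂ B₂ : Type*} [MeasurableSpace A₁] [MeasurableSpace B₁]
    [MeasurableSpace A₂] [MeasurableSpace B₂]
    (π : Measure ((A₁ × B₁) × (A₂ × B₂))) : Prop :=
  ∀ S : Set A₂, MeasurableSet S →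
    (π[fun z => S.indicator (fun _ => (1 : ℝ)) z.2.1 |
        MeasurableSpace.comap Prod.fst inferInstance])
      =ᵐ[π]
    (π[fun z => S.indicator (fun _ => (1 : ℝ)) z.2.1 |
        MeasurableSpace.comap (fun z => z.1.1) inferInstance])

/-- The two-time-point causal Wasserstein "distance" on `𝒫_p(𝒳₁ × 𝒳₂)`. -/
def CW2 (p : ℝ) (dA : A → A → ℝ≥0∞) (dB : B → B → ℝ≥0∞)
    (μ ν : Measure (A × B)) : ℝ≥0∞ :=
  ⨅ π ∈ {π ∈ Cpl μ ν | Causal2 π},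
    (∫⁻ z, (dA z.1.1 z.2.1 ^ p + dB z.1.2 z.2.2 ^ p) ∂π) ^ (1 / p)

end Lifted


/-- The space of probability measures on a standard Borel space is a measurable retract of a
countable power of the reals. -/
lemma exists_retract (B : Type*) [MeasurableSpace B] [StandardBorelSpace B] [Nonempty B] :
    ∃ (s : Measure B → (ℚ → ℝ)) (r : (ℚ → ℝ) → Measure B), Measurable s ∧ Measurable r ∧
      ∀ m, IsProbabilityMeasure m → r (s m) = m := by
  obtain ⟨e, he⟩ := exists_measurableEmbedding_real B
  obtain ⟨e', he', hee⟩ := he.exists_measurable_extend (g := (id : B → B)) measurable_id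
    (fun _ => inferInstance)
  have hf : Measurable (fun x : ℚ → ℝ => x) := measurable_id
  refine ⟨fun m q => (m.map e (Set.Iic (q : ℝ))).toReal,
    fun x => (stieltjesOfMeasurableRat (fun x : ℚ → ℝ => x) hf x).measure.map e', ?_, ?_, ?_⟩
  · refine measurable_pi_lambda _ fun q => ?_
    exact ((Measure.measurable_coe measurableSet_Iic).comp
      (Measure.measurable_map e he.measurable)).ennreal_toReal
  · exact (Measure.measurable_map e' he').comp (measurable_measure_stieltjesOfMeasurableRat hf)
  · intro m hm
    have hm' : IsProbabilityMeasure (m.map e) := Measure.isProbabilityMeasure_map he.measurable.aemeasurable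
    set x : ℚ → ℝ := fun q => (m.map e (Set.Iic (q : ℝ))).toReal with hx
    have hxc : ∀ q : ℚ, x q = (cdf (m.map e)) (q : ℝ) := by
      intro q; rw [cdf_eq_real]; rfl
    have hxc' : x = fun q : ℚ => (cdf (m.map e)) (q : ℝ) := funext hxc
    have hpt : IsRatStieltjesPoint (fun x : ℚ → ℝ => x) x := by
      refine ⟨?_, ?_, ?_, ?_⟩
      · intro a b hab
        simp only [hxc]
        exact (cdf _).mono (by exact_mod_cast hab)
      · simp only [hxc']
        exact (tendsto_cdf_atTop _).comp (tendsto_ratCast_atTop_iff.2 tendsto_id)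
      · simp only [hxc']
        exact (tendsto_cdf_atBot _).comp (tendsto_ratCast_atBot_iff.2 tendsto_id)
      · intro t
        simp only [hxc]
        rw [← StieltjesFunction.iInf_rat_gt_eq]
        refine Equiv.iInf_congr (Equiv.subtypeEquivRight fun r => ?_) fun r => rfl
        simp
    have h1 : (stieltjesOfMeasurableRat (fun x : ℚ → ℝ => x) hf x) = cdf (m.map e) := by
      ext t
      rw [← StieltjesFunction.iInf_rat_gt_eq, ← StieltjesFunction.iInf_rat_gt_eq]
      refine iInf_congr fun r => ?_
      rw [stieltjesOfMeasurableRat_eq, toRatCDF_of_isRatStieltjesPoint hpt, hxc]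
    change (stieltjesOfMeasurableRat (fun x : ℚ → ℝ => x) hf x).measure.map e' = m
    rw [h1, measure_cdf, Measure.map_map he' he.measurable, hee, Measure.map_id]

lemma exists_disint {T A B : Type*} [MeasurableSpace T] [MeasurableSpace A] [MeasurableSpace B]
    [StandardBorelSpace A] [Nonempty A] [StandardBorelSpace B] [Nonempty B]
    (ρ : Measure (T × (A × Measure B))) [IsProbabilityMeasure ρ]
    (h : ∀ᵐ z ∂ρ, IsProbabilityMeasure z.2.2) :
    ∃ κ : Kernel T (A × Measure B), IsMarkovKernel κ ∧ ρ = ρ.fst ⊗ₘ κ := by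
  obtain ⟨s, r, hs, hr, hrs⟩ := exists_retract B
  let S : A × Measure B → A × (ℚ → ℝ) := Prod.map id s
  let R : A × (ℚ → ℝ) → A × Measure B := Prod.map id r
  have hS : Measurable S := measurable_id.prodMap hs
  have hR : Measurable R := measurable_id.prodMap hr
  let ρ' := ρ.map (Prod.map id S)
  have : IsProbabilityMeasure ρ' :=
    Measure.isProbabilityMeasure_map (measurable_id.prodMap hS).aemeasurable
  have hfst : ρ'.fst = ρ.fst := by
    simp only [ρ', Measure.fst]
    rw [Measure.map_map measurable_fst (measurable_id.prodMap hS)]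
    rfl
  refine ⟨ρ'.condKernel.map R, Kernel.IsMarkovKernel.map _ hR, ?_⟩
  rw [← hfst, Measure.compProd_map hR, ρ'.disintegrate ρ'.condKernel]
  simp only [ρ']
  rw [Measure.map_map (measurable_id.prodMap hR) (measurable_id.prodMap hS)]
  conv_lhs => rw [← Measure.map_id (μ := ρ)]
  refine Measure.map_congr ?_
  filter_upwards [h] with z hz
  obtain ⟨t, a, m⟩ := z
  simp only [S, R, Prod.map, id, Function.comp]
  rw [hrs m hz]


lemma compProd_comap_map {Ω T C : Type*} [MeasurableSpace Ω] [MeasurableSpace T]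
    [MeasurableSpace C] (μ : Measure Ω) [IsFiniteMeasure μ] (f : Ω → T) (hf : Measurable f)
    (κ : Kernel T C) [IsMarkovKernel κ] :
    (μ ⊗ₘ κ.comap f hf).map (Prod.map f id) = μ.map f ⊗ₘ κ := by
  ext s hs
  have hm : Measurable (Prod.map f id : Ω × C → T × C) := hf.prodMap measurable_id
  rw [Measure.map_apply hm hs, Measure.compProd_apply (hm hs), Measure.compProd_apply hs,
    lintegral_map (Kernel.measurable_kernel_prodMk_left hs) hf]
  rfl

section
variable {B : Type*} [MetricSpace B] [CompleteSpace B] [SecondCountableTopology B]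
  [MeasurableSpace B] [BorelSpace B] [Nonempty B]

lemma cpl_isProb {S T : Type*} [MeasurableSpace S] [MeasurableSpace T] {a : Measure S}
    [IsProbabilityMeasure a] {b : Measure T} {π : Measure (S × T)} (h : π ∈ Cpl a b) :
    IsProbabilityMeasure π := by
  constructor
  have := congrArg (fun m => m Set.univ) h.1
  simpa [Measure.map_apply measurable_fst MeasurableSet.univ] using this

/-- Gluing two couplings of measures on a Polish space. -/
lemma cpl_triangle {p : ℝ} (hp : 1 ≤ p) {a b c : Measure B} [IsProbabilityMeasure a]
    [IsProbabilityMeasure b]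
    {π₁ π₂ : Measure (B × B)} (h₁ : π₁ ∈ Cpl a b) (h₂ : π₂ ∈ Cpl b c) :
    ∃ π ∈ Cpl a c, (∫⁻ z, edist z.1 z.2 ^ p ∂π) ^ (1 / p) ≤
      (∫⁻ z, edist z.1 z.2 ^ p ∂π₁) ^ (1 / p) + (∫⁻ z, edist z.1 z.2 ^ p ∂π₂) ^ (1 / p) := by
  have := cpl_isProb h₁
  have := cpl_isProb h₂
  let κ := π₂.condKernel
  have hκ : b ⊗ₘ κ = π₂ := by
    have := π₂.disintegrate κ
    rwa [Measure.fst, h₂.1] at this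
  let Q := π₁ ⊗ₘ κ.comap Prod.snd measurable_snd
  have hQ1 : Q.map Prod.fst = π₁ := Measure.fst_compProd _ _
  have hQ2 : Q.map (Prod.map Prod.snd id) = π₂ := by
    rw [compProd_comap_map, h₁.2, hκ]
  have m1 : Measurable (fun z : (B × B) × B => (z.1.1, z.2)) := by fun_prop
  have m2 : Measurable (Prod.map Prod.snd id : (B × B) × B → B × B) := by fun_prop
  have me : Measurable (fun z : B × B => edist z.1 z.2 ^ p) := by fun_prop
  refine ⟨Q.map (fun z => (z.1.1, z.2)), ⟨?_, ?_⟩, ?_⟩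
  · rw [Measure.map_map measurable_fst m1, ← h₁.1, ← hQ1,
      Measure.map_map measurable_fst measurable_fst]
    rfl
  · rw [Measure.map_map measurable_snd m1, ← h₂.2, ← hQ2,
      Measure.map_map measurable_snd m2]
    rfl
  · rw [← hQ1, ← hQ2, lintegral_map me m1, lintegral_map me m2, lintegral_map me measurable_fst]
    refine le_trans ?_ (ENNReal.lintegral_Lp_add_le (p := p) (μ := Q)
      (f := fun z => edist z.1.1 z.1.2) (g := fun z => edist z.1.2 z.2) (by fun_prop)
      (by fun_prop) hp)
    gcongr with z
    exact edist_triangle _ _ _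

lemma Wp_le_of_three {p : ℝ} (hp : 1 ≤ p) {a b c d : Measure B} [IsProbabilityMeasure a]
    [IsProbabilityMeasure b] [IsProbabilityMeasure c]
    {π₁ π₂ π₃ : Measure (B × B)} (h₁ : π₁ ∈ Cpl a b) (h₂ : π₂ ∈ Cpl b c) (h₃ : π₃ ∈ Cpl c d) :
    Wp p edist a d ≤ (∫⁻ z, edist z.1 z.2 ^ p ∂π₁) ^ (1 / p) +
      (∫⁻ z, edist z.1 z.2 ^ p ∂π₂) ^ (1 / p) + (∫⁻ z, edist z.1 z.2 ^ p ∂π₃) ^ (1 / p) := by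
  obtain ⟨π, hπ, hle⟩ := cpl_triangle hp h₁ h₂
  obtain ⟨π', hπ', hle'⟩ := cpl_triangle hp hπ h₃
  refine (iInf₂_le π' hπ').trans (hle'.trans ?_)
  gcongr
end


/-- The density (with respect to the product measure) of a sub-coupling with density `u`,
completed to a coupling by a normalized product of the missing mass. -/
def complDens {B : Type*} [MeasurableSpace B] (u : B × B → ℝ≥0∞) (m n : Measure B) :
    B × B → ℝ≥0∞ := fun z =>
  u z + (1 - ∫⁻ y, u (z.1, y) ∂n) * (1 - ∫⁻ x, u (x, z.2) ∂m) *
    (1 - ∫⁻ x, ∫⁻ y, u (x, y) ∂n ∂m)⁻¹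

section
variable {B : Type*} [MeasurableSpace B]

lemma measurable_complDens {u : B × B → ℝ≥0∞} (hu : Measurable u) (m n : Measure B)
    [SFinite m] [SFinite n] : Measurable (complDens u m n) := by
  unfold complDens
  have h1 : Measurable fun x => ∫⁻ y, u (x, y) ∂n := hu.lintegral_prod_right'
  have h2 : Measurable fun y => ∫⁻ x, u (x, y) ∂m := hu.lintegral_prod_left'
  fun_prop

lemma lintegral_one_sub {m : Measure B} [IsProbabilityMeasure m] {f : B → ℝ≥0∞}
    (hf : Measurable f) (h : ∀ x, f x ≤ 1) : ∫⁻ x, (1 - f x) ∂m = 1 - ∫⁻ x, f x ∂m := by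
  rw [lintegral_sub hf]
  · simp
  · refine ne_top_of_le_ne_top one_ne_top ?_
    calc ∫⁻ x, f x ∂m ≤ ∫⁻ x, 1 ∂m := lintegral_mono h
      _ = 1 := by simp
  · exact ae_of_all _ h

lemma complDens_cpl {u : B × B → ℝ≥0∞} (hu : Measurable u) (m n : Measure B)
    [IsProbabilityMeasure m] [IsProbabilityMeasure n]
    (h1 : ∀ x, ∫⁻ y, u (x, y) ∂n ≤ 1) (h2 : ∀ y, ∫⁻ x, u (x, y) ∂m ≤ 1)
    (hI : ∫⁻ x, ∫⁻ y, u (x, y) ∂n ∂m < 1) :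
    (m.prod n).withDensity (complDens u m n) ∈ Cpl m n := by
  have m1 : Measurable fun x => ∫⁻ y, u (x, y) ∂n := hu.lintegral_prod_right'
  have m2 : Measurable fun y => ∫⁻ x, u (x, y) ∂m := hu.lintegral_prod_left'
  have mc := measurable_complDens hu m n
  have hI2 : ∫⁻ y, ∫⁻ x, u (x, y) ∂m ∂n = ∫⁻ x, ∫⁻ y, u (x, y) ∂n ∂m :=
    (lintegral_lintegral_swap (f := fun x y => u (x, y)) hu.aemeasurable).symm
  set I := ∫⁻ x, ∫⁻ y, u (x, y) ∂n ∂m with hIdef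
  have hII : (1 - I) * (1 - I)⁻¹ = 1 :=
    ENNReal.mul_inv_cancel (tsub_pos_of_lt hI).ne' (ne_top_of_le_ne_top one_ne_top tsub_le_self)
  have k1 : ∀ x, ∫⁻ y, complDens u m n (x, y) ∂n = 1 := by
    intro x
    simp only [complDens]
    rw [lintegral_add_left (by fun_prop), lintegral_mul_const _ (by fun_prop),
      lintegral_const_mul _ (by fun_prop), lintegral_one_sub m2 h2, hI2, mul_assoc, ← hIdef,
      hII, mul_one, add_tsub_cancel_of_le (h1 x)]
  have k2 : ∀ y, ∫⁻ x, complDens u m n (x, y) ∂m = 1 := by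
    intro y
    simp only [complDens]
    rw [lintegral_add_left (by fun_prop), lintegral_mul_const _ (by fun_prop),
      lintegral_mul_const _ (by fun_prop), lintegral_one_sub m1 h1, mul_assoc, ← hIdef,
      mul_comm (1 - I), mul_assoc, mul_comm (1 - I)⁻¹, hII, mul_one, add_tsub_cancel_of_le (h2 y)]
  constructor
  · ext s hs
    rw [Measure.map_apply measurable_fst hs, withDensity_apply _ (measurable_fst hs),
      ← lintegral_indicator (measurable_fst hs), lintegral_prod _
        (mc.indicator (measurable_fst hs)).aemeasurable]
    have : ∀ x, ∫⁻ y, (Prod.fst ⁻¹' s).indicator (complDens u m n) (x, y) ∂n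
        = s.indicator 1 x := by
      intro x
      by_cases hx : x ∈ s
      · simp [Set.indicator, hx, k1]
      · simp [Set.indicator, hx]
    simp_rw [this]
    exact lintegral_indicator_one hs
  · ext s hs
    rw [Measure.map_apply measurable_snd hs, withDensity_apply _ (measurable_snd hs),
      ← lintegral_indicator (measurable_snd hs), lintegral_prod_symm _
        (mc.indicator (measurable_snd hs)).aemeasurable]
    have : ∀ y, ∫⁻ x, (Prod.snd ⁻¹' s).indicator (complDens u m n) (x, y) ∂m
        = s.indicator 1 y := by
      intro x
      by_cases hx : x ∈ s
      · simp [Set.indicator, hx, k2]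
      · simp [Set.indicator, hx]
    simp_rw [this]
    exact lintegral_indicator_one hs
end

section
variable {B : Type*} [MetricSpace B] [SecondCountableTopology B]
  [MeasurableSpace B] [BorelSpace B]

lemma complDens_cost {p : ℝ} (hp : 1 ≤ p) {u : B × B → ℝ≥0∞} (hu : Measurable u) (m n : Measure B)
    [IsProbabilityMeasure m] [IsProbabilityMeasure n]
    (h1 : ∀ x, ∫⁻ y, u (x, y) ∂n ≤ 1) (h2 : ∀ y, ∫⁻ x, u (x, y) ∂m ≤ 1)
    (hI : ∫⁻ x, ∫⁻ y, u (x, y) ∂n ∂m < 1) (x₀ : B) :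
    ∫⁻ z, edist z.1 z.2 ^ p ∂((m.prod n).withDensity (complDens u m n)) ≤
      ∫⁻ z, edist z.1 z.2 ^ p * u z ∂(m.prod n) +
      2 ^ (p - 1) * (∫⁻ x, edist x x₀ ^ p * (1 - ∫⁻ y, u (x, y) ∂n) ∂m +
        ∫⁻ y, edist x₀ y ^ p * (1 - ∫⁻ x, u (x, y) ∂m) ∂n) := by
  have m1 : Measurable fun x => ∫⁻ y, u (x, y) ∂n := hu.lintegral_prod_right'
  have m2 : Measurable fun y => ∫⁻ x, u (x, y) ∂m := hu.lintegral_prod_left'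
  have mc := measurable_complDens hu m n
  have hI2 : ∫⁻ y, ∫⁻ x, u (x, y) ∂m ∂n = ∫⁻ x, ∫⁻ y, u (x, y) ∂n ∂m :=
    (lintegral_lintegral_swap (f := fun x y => u (x, y)) hu.aemeasurable).symm
  rw [lintegral_withDensity_eq_lintegral_mul _ mc (by fun_prop)]
  set I := ∫⁻ x, ∫⁻ y, u (x, y) ∂n ∂m with hIdef
  have hII : (1 - I) * (1 - I)⁻¹ = 1 :=
    ENNReal.mul_inv_cancel (tsub_pos_of_lt hI).ne' (ne_top_of_le_ne_top one_ne_top tsub_le_self)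
  set f := fun x => 1 - ∫⁻ y, u (x, y) ∂n with hf
  set g := fun y => 1 - ∫⁻ x, u (x, y) ∂m with hg
  have mf : Measurable f := by fun_prop
  have mg : Measurable g := by fun_prop
  have If : ∫⁻ x, f x ∂m = 1 - I := lintegral_one_sub m1 h1
  have Ig : ∫⁻ y, g y ∂n = 1 - I := by rw [← hI2]; exact lintegral_one_sub m2 h2
  have e1 : ∫⁻ z, edist z.1 x₀ ^ p * f z.1 * (g z.2 * (1 - I)⁻¹) ∂(m.prod n)
      = ∫⁻ x, edist x x₀ ^ p * f x ∂m := by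
    rw [lintegral_prod_mul (f := fun x => edist x x₀ ^ p * f x) (g := fun y => g y * (1 - I)⁻¹)
      (by fun_prop) (by fun_prop), lintegral_mul_const _ mg, Ig, hII, mul_one]
  have e2 : ∫⁻ z, (f z.1 * (1 - I)⁻¹) * (edist x₀ z.2 ^ p * g z.2) ∂(m.prod n)
      = ∫⁻ y, edist x₀ y ^ p * g y ∂n := by
    rw [lintegral_prod_mul (g := fun x => edist x₀ x ^ p * g x) (f := fun y => f y * (1 - I)⁻¹)
      (by fun_prop) (by fun_prop), lintegral_mul_const _ mf, If, hII, one_mul]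
  rw [← e1, ← e2, ← lintegral_add_left (by fun_prop), ← lintegral_const_mul _ (by fun_prop),
    ← lintegral_add_left (by fun_prop)]
  refine lintegral_mono fun z => ?_
  have ht : edist z.1 z.2 ^ p ≤ 2 ^ (p - 1) * (edist z.1 x₀ ^ p + edist x₀ z.2 ^ p) :=
    (ENNReal.rpow_le_rpow (edist_triangle z.1 x₀ z.2) (by linarith)).trans
      (ENNReal.rpow_add_le_mul_rpow_add_rpow _ _ hp)
  have hc : complDens u m n z = u z + f z.1 * g z.2 * (1 - I)⁻¹ := rfl
  simp only [Pi.mul_apply, hc]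
  rw [add_mul, mul_comm (u z)]
  refine add_le_add le_rfl ?_
  calc f z.1 * g z.2 * (1 - I)⁻¹ * edist z.1 z.2 ^ p
      ≤ f z.1 * g z.2 * (1 - I)⁻¹ * (2 ^ (p - 1) * (edist z.1 x₀ ^ p + edist x₀ z.2 ^ p)) := by
        gcongr
    _ = _ := by ring

lemma exists_idx [Nonempty B] (δ : ℝ≥0∞) (hδ : δ ≠ 0) :
    ∃ i : B → ℕ, Measurable i ∧ ∀ x y, i x = i y → edist x y ≤ δ := by
  classical
  have hd : ∀ x : B, ∃ N, edist x (TopologicalSpace.denseSeq B N) < δ / 2 := by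
    intro x
    obtain ⟨y, ⟨N, rfl⟩, hy⟩ := EMetric.mem_closure_iff.1
      (TopologicalSpace.denseRange_denseSeq B x) (δ / 2) (ENNReal.half_pos hδ)
    exact ⟨N, hy⟩
  refine ⟨fun x => Nat.find (hd x), measurable_find hd fun N => ?_, ?_⟩
  · exact measurableSet_lt (by fun_prop) measurable_const
  · intro x y hxy
    have h1 := Nat.find_spec (hd x)
    have h2 := Nat.find_spec (hd y)
    simp only at hxy
    rw [← hxy] at h2
    calc edist x y ≤ edist x _ + edist _ y := edist_triangle _ _ _
      _ ≤ δ / 2 + δ / 2 := add_le_add h1.le (by rw [edist_comm]; exact h2.le)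
      _ = δ := ENNReal.add_halves δ
end


/-- Density of a measure on `ℕ × ℕ` with respect to the product of its marginals. -/
def cdens (P : Measure (ℕ × ℕ)) (z : ℕ × ℕ) : ℝ≥0∞ :=
  P {z} / (P.map Prod.fst {z.1} * P.map Prod.snd {z.2})

lemma le_marg_fst (P : Measure (ℕ × ℕ)) (z : ℕ × ℕ) : P {z} ≤ P.map Prod.fst {z.1} := by
  rw [Measure.map_apply measurable_fst (measurableSet_singleton _)]
  exact measure_mono (by simp)

lemma le_marg_snd (P : Measure (ℕ × ℕ)) (z : ℕ × ℕ) : P {z} ≤ P.map Prod.snd {z.2} := by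
  rw [Measure.map_apply measurable_snd (measurableSet_singleton _)]
  exact measure_mono (by simp)

lemma cdens_mul (P : Measure (ℕ × ℕ)) [IsProbabilityMeasure P] (z : ℕ × ℕ) :
    cdens P z * (P.map Prod.fst {z.1} * P.map Prod.snd {z.2}) = P {z} := by
  have : IsProbabilityMeasure (P.map Prod.fst) :=
    Measure.isProbabilityMeasure_map measurable_fst.aemeasurable
  have : IsProbabilityMeasure (P.map Prod.snd) :=
    Measure.isProbabilityMeasure_map measurable_snd.aemeasurable
  by_cases h : P.map Prod.fst {z.1} * P.map Prod.snd {z.2} = 0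
  · rw [h, mul_zero]
    rcases mul_eq_zero.1 h with h | h
    · exact (nonpos_iff_eq_zero.1 (h ▸ le_marg_fst P z)).symm
    · exact (nonpos_iff_eq_zero.1 (h ▸ le_marg_snd P z)).symm
  · exact ENNReal.div_mul_cancel h (ENNReal.mul_ne_top (measure_ne_top _ _) (measure_ne_top _ _))

lemma cdens_ne_top (P : Measure (ℕ × ℕ)) [IsProbabilityMeasure P] (z : ℕ × ℕ) :
    cdens P z ≠ ∞ := by
  by_cases h : P.map Prod.fst {z.1} * P.map Prod.snd {z.2} = 0
  · have : P {z} = 0 := by rw [← cdens_mul P z, h, mul_zero]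
    simp [cdens, this]
  · exact ENNReal.div_ne_top (measure_ne_top _ _) h

lemma cdens_row (P : Measure (ℕ × ℕ)) [IsProbabilityMeasure P] (j : ℕ) :
    ∫⁻ l, cdens P (j, l) ∂(P.map Prod.snd) ≤ 1 ∧
      (P.map Prod.fst {j} ≠ 0 → ∫⁻ l, cdens P (j, l) ∂(P.map Prod.snd) = 1) := by
  have : IsProbabilityMeasure (P.map Prod.fst) :=
    Measure.isProbabilityMeasure_map measurable_fst.aemeasurable
  have hz : P.map Prod.fst {j} = 0 → ∀ l, cdens P (j, l) = 0 := by
    intro h l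
    have : P {(j, l)} = 0 := by rw [← cdens_mul P (j, l), h, zero_mul, mul_zero]
    simp [cdens, this]
  have key : P.map Prod.fst {j} ≠ 0 → ∫⁻ l, cdens P (j, l) ∂(P.map Prod.snd) = 1 := by
    intro h
    have hm : P.map Prod.fst {j} * ∫⁻ l, cdens P (j, l) ∂(P.map Prod.snd) = P.map Prod.fst {j} := by
      rw [lintegral_countable', ← ENNReal.tsum_mul_left]
      have : ∀ l, P.map Prod.fst {j} * (cdens P (j, l) * P.map Prod.snd {l}) = P {(j, l)} := by
        intro l
        rw [← cdens_mul P (j, l)]; ring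
      simp_rw [this]
      rw [← measure_iUnion, Measure.map_apply measurable_fst (measurableSet_singleton _)]
      · congr 1
        ext ⟨a, b⟩
        simp [eq_comm]
      · intro a b hab
        simpa [Function.onFun] using hab
      · intro l; exact measurableSet_singleton _
    conv_rhs at hm => rw [← mul_one (P.map Prod.fst {j})]
    exact (ENNReal.mul_right_inj h (measure_ne_top _ _)).1 hm
  refine ⟨?_, key⟩
  by_cases h : P.map Prod.fst {j} = 0
  · simp [hz h]
  · exact (key h).le

lemma cdens_swap (P : Measure (ℕ × ℕ)) (j l : ℕ) :
    cdens (P.map Prod.swap) (l, j) = cdens P (j, l) := by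
  unfold cdens
  rw [Measure.map_map measurable_fst measurable_swap, Measure.map_map measurable_snd measurable_swap,
    Measure.map_apply measurable_swap (measurableSet_singleton _)]
  rw [mul_comm]
  congr 2
  ext ⟨a, b⟩; simp [and_comm]

lemma cdens_col (P : Measure (ℕ × ℕ)) [IsProbabilityMeasure P] (l : ℕ) :
    ∫⁻ j, cdens P (j, l) ∂(P.map Prod.fst) ≤ 1 ∧
      (P.map Prod.snd {l} ≠ 0 → ∫⁻ j, cdens P (j, l) ∂(P.map Prod.fst) = 1) := by
  have : IsProbabilityMeasure (P.map Prod.swap) :=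
    Measure.isProbabilityMeasure_map measurable_swap.aemeasurable
  have := cdens_row (P.map Prod.swap) l
  rw [Measure.map_map measurable_fst measurable_swap,
    Measure.map_map measurable_snd measurable_swap] at this
  simp_rw [cdens_swap] at this
  exact this

lemma cdens_lintegral (P : Measure (ℕ × ℕ)) [IsProbabilityMeasure P] (H : ℕ × ℕ → ℝ≥0∞) :
    ∫⁻ z, H z * cdens P z ∂((P.map Prod.fst).prod (P.map Prod.snd)) = ∫⁻ z, H z ∂P := by
  have : IsProbabilityMeasure (P.map Prod.snd) :=
    Measure.isProbabilityMeasure_map measurable_snd.aemeasurable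
  rw [lintegral_countable', lintegral_countable']
  refine tsum_congr fun z => ?_
  obtain ⟨a, b⟩ := z
  rw [mul_assoc, ← Set.singleton_prod_singleton, Measure.prod_prod, cdens_mul,
    Set.singleton_prod_singleton]

/-- Discretized values. -/
def qv (N : ℕ) (a : ℕ × ℕ →₀ ℕ) (z : ℕ × ℕ) : ℝ≥0∞ := (a z : ℝ≥0∞) / ((N : ℝ≥0∞) + 1)

/-- Finitely supported integer approximation. -/
def apx (c : ℕ × ℕ → ℝ≥0∞) (N : ℕ) : ℕ × ℕ →₀ ℕ :=
  Finsupp.onFinset (Finset.range N ×ˢ Finset.range N)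
    (fun z => if z ∈ Finset.range N ×ˢ Finset.range N then ⌊(c z).toReal * N⌋₊ else 0)
    (fun z hz => by by_contra h; simp only [h, if_false] at hz; exact hz rfl)

lemma qv_apx_le {c : ℕ × ℕ → ℝ≥0∞} (hc : ∀ z, c z ≠ ∞) (N : ℕ) (z : ℕ × ℕ) :
    qv N (apx c N) z ≤ c z * ((N : ℝ≥0∞) / ((N : ℝ≥0∞) + 1)) := by
  unfold qv
  rw [← mul_div_assoc]
  gcongr
  unfold apx
  rw [Finsupp.onFinset_apply]
  split_ifs
  · calc ((⌊(c z).toReal * N⌋₊ : ℕ) : ℝ≥0∞) = ENNReal.ofReal (⌊(c z).toReal * N⌋₊ : ℕ) := by simp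
      _ ≤ ENNReal.ofReal ((c z).toReal * N) :=
        ENNReal.ofReal_le_ofReal (Nat.floor_le (by positivity))
      _ = c z * N := by
        rw [ENNReal.ofReal_mul toReal_nonneg, ENNReal.ofReal_toReal (hc z)]; simp
  · simp

lemma div_succ_lt (N : ℕ) : ((N : ℝ≥0∞) / ((N : ℝ≥0∞) + 1)) < 1 := by
  rw [ENNReal.div_lt_iff (by simp) (by simp), one_mul]
  exact_mod_cast Nat.lt_succ_self N

lemma tendsto_qv_apx {c : ℕ × ℕ → ℝ≥0∞} (hc : ∀ z, c z ≠ ∞) (z : ℕ × ℕ) :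
    Tendsto (fun N => qv N (apx c N) z) atTop (𝓝 (c z)) := by
  have h1 : Tendsto (fun N : ℕ => (⌊(c z).toReal * (N : ℝ)⌋₊ : ℝ) / (N : ℝ)) atTop
      (𝓝 (c z).toReal) :=
    (tendsto_nat_floor_mul_div_atTop toReal_nonneg).comp tendsto_natCast_atTop_atTop
  have h2 : Tendsto (fun N : ℕ => (N : ℝ) / ((N : ℝ) + 1)) atTop (𝓝 1) :=
    tendsto_natCast_div_add_atTop (1 : ℝ)
  have h3 := (ENNReal.continuous_ofReal.tendsto _).comp (h1.mul h2)
  rw [mul_one, ENNReal.ofReal_toReal (hc z)] at h3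
  refine h3.congr' ?_
  filter_upwards [eventually_gt_atTop (max z.1 z.2), eventually_gt_atTop 0] with N hN hN0
  have hz : z ∈ Finset.range N ×ˢ Finset.range N := by
    simp [(le_max_left _ _).trans_lt hN, (le_max_right _ _).trans_lt hN]
  have hN' : (N : ℝ) ≠ 0 := by positivity
  simp only [Function.comp, qv, apx, Finsupp.onFinset_apply, if_pos hz]
  rw [div_mul_div_cancel₀ hN', ENNReal.ofReal_div_of_pos (by positivity),
    ENNReal.ofReal_add (by positivity) zero_le_one]
  simp


lemma tail_tendsto {B : Type*} [MeasurableSpace B] (m : Measure B) [IsProbabilityMeasure m]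
    {i : B → ℕ} (hi : Measurable i) {F : B → ℝ≥0∞} (hF : Measurable F) (hFt : ∫⁻ x, F x ∂m ≠ ∞)
    (f : ℕ → ℕ → ℝ≥0∞)
    (hf : ∀ j, m.map i {j} ≠ 0 → Tendsto (fun N => f N j) atTop (𝓝 1)) :
    Tendsto (fun N => ∫⁻ x, F x * (1 - f N (i x)) ∂m) atTop (𝓝 0) := by
  have h0 : ∫⁻ _, (0 : ℝ≥0∞) ∂m = 0 := lintegral_zero
  rw [← h0]
  refine tendsto_lintegral_of_dominated_convergence F (fun N => ?_) (fun N => ?_) hFt ?_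
  · have : Measurable (f N) := measurable_from_nat
    exact hF.mul (measurable_const.sub (this.comp hi))
  · refine ae_of_all _ fun x => ?_
    calc F x * (1 - f N (i x)) ≤ F x * 1 := by gcongr; exact tsub_le_self
      _ = F x := mul_one _
  · have h1 : ∀ᵐ x ∂m, m.map i {i x} ≠ 0 := by
      have h2 : ∀ᵐ j ∂(m.map i), m.map i {j} ≠ 0 := by
        rw [ae_iff]
        refine (measure_null_iff_singleton (Set.to_countable _)).2 fun j hj => ?_
        simpa using hj
      exact ae_of_ae_map hi.aemeasurable h2
    filter_upwards [h1, ae_lt_top hF hFt] with x hx hx2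
    have h3 := ENNReal.Tendsto.sub (tendsto_const_nhds (x := (1 : ℝ≥0∞))) (hf _ hx) (Or.inl one_ne_top)
    rw [tsub_self] at h3
    have := ENNReal.Tendsto.const_mul (a := F x) h3 (Or.inr hx2.ne)
    simpa using this

lemma exists_approx {B : Type*} [MetricSpace B] [SecondCountableTopology B] [MeasurableSpace B]
    [BorelSpace B] {p : ℝ} (hp : 1 ≤ p) (m n : Measure B) [IsProbabilityMeasure m]
    [IsProbabilityMeasure n] (x₀ : B) (hm : ∫⁻ x, edist x x₀ ^ p ∂m ≠ ∞)
    (hn : ∫⁻ y, edist x₀ y ^ p ∂n ≠ ∞) {π : Measure (B × B)} (hπ : π ∈ Cpl m n)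
    {i : B → ℕ} (hi : Measurable i) {δ : ℝ≥0∞} (hδ : ∀ x y, i x = i y → edist x y ≤ δ)
    {ε : ℝ≥0∞} (hε : ε ≠ 0) :
    ∃ N a, (∀ j, ∫⁻ y, qv N a (j, i y) ∂n ≤ 1) ∧ (∀ j, ∫⁻ x, qv N a (i x, j) ∂m ≤ 1) ∧
      ∫⁻ x, ∫⁻ y, qv N a (i x, i y) ∂n ∂m < 1 ∧
      ∫⁻ z, edist z.1 z.2 ^ p ∂((m.prod n).withDensity
        (complDens (fun z => qv N a (i z.1, i z.2)) m n)) ≤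
        ∫⁻ z, (edist z.1 z.2 + 2 * δ) ^ p ∂π + ε := by
  have p0 : 0 < p := by linarith
  have pπ : IsProbabilityMeasure π := by
    obtain ⟨h, -⟩ := hπ
    constructor
    rw [← measure_univ (μ := m), ← h, Measure.map_apply measurable_fst .univ, Set.preimage_univ]
  set P := π.map (Prod.map i i) with hP
  have pP : IsProbabilityMeasure P :=
    Measure.isProbabilityMeasure_map (hi.prodMap hi).aemeasurable
  have P1 : P.map Prod.fst = m.map i := by
    rw [hP, Measure.map_map measurable_fst (hi.prodMap hi), ← hπ.1,
      Measure.map_map hi measurable_fst]; rfl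
  have P2 : P.map Prod.snd = n.map i := by
    rw [hP, Measure.map_map measurable_snd (hi.prodMap hi), ← hπ.2,
      Measure.map_map hi measurable_snd]; rfl
  have hc := cdens_ne_top P
  obtain ⟨q, hq⟩ : ∃ q : ℕ → ℕ × ℕ → ℝ≥0∞, ∀ N, q N = qv N (apx (cdens P) N) := ⟨_, fun _ => rfl⟩
  have qle : ∀ N z, q N z ≤ cdens P z * ((N : ℝ≥0∞) / ((N : ℝ≥0∞) + 1)) := fun N z => by
    rw [hq]; exact qv_apx_le hc N z
  have qle' : ∀ N z, q N z ≤ cdens P z := fun N z => (qle N z).trans (by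
    calc _ ≤ cdens P z * 1 := by gcongr; exact (div_succ_lt N).le
      _ = _ := mul_one _)
  have mN : ∀ f : ℕ → ℝ≥0∞, Measurable f := fun f => measurable_from_nat
  have mNN : ∀ f : ℕ × ℕ → ℝ≥0∞, Measurable f := fun f => measurable_of_countable f
  have Rn : ∀ f : ℕ → ℝ≥0∞, ∫⁻ y, f (i y) ∂n = ∫⁻ l, f l ∂(P.map Prod.snd) := fun f => by
    rw [P2, lintegral_map (mN f) hi]
  have Rm : ∀ f : ℕ → ℝ≥0∞, ∫⁻ x, f (i x) ∂m = ∫⁻ l, f l ∂(P.map Prod.fst) := fun f => by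
    rw [P1, lintegral_map (mN f) hi]
  have row : ∀ N j, ∫⁻ y, q N (j, i y) ∂n ≤ 1 * ((N : ℝ≥0∞) / ((N : ℝ≥0∞) + 1)) := fun N j => by
    rw [Rn fun l => q N (j, l)]
    calc _ ≤ ∫⁻ l, cdens P (j, l) * ((N : ℝ≥0∞) / ((N : ℝ≥0∞) + 1)) ∂(P.map Prod.snd) :=
          lintegral_mono fun l => qle N _
      _ = (∫⁻ l, cdens P (j, l) ∂(P.map Prod.snd)) * ((N : ℝ≥0∞) / ((N : ℝ≥0∞) + 1)) :=
          lintegral_mul_const _ (mN _)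
      _ ≤ _ := by gcongr; exact (cdens_row P j).1
  have row1 : ∀ N j, ∫⁻ y, q N (j, i y) ∂n ≤ 1 := fun N j =>
    (row N j).trans (by rw [one_mul]; exact (div_succ_lt N).le)
  have col1 : ∀ N l, ∫⁻ x, q N (i x, l) ∂m ≤ 1 := fun N l => by
    rw [Rm fun j => q N (j, l)]
    exact (lintegral_mono fun j => qle' N _).trans (cdens_col P l).1
  have hI : ∀ N, ∫⁻ x, ∫⁻ y, q N (i x, i y) ∂n ∂m < 1 := fun N => by
    calc _ ≤ ∫⁻ x, 1 * ((N : ℝ≥0∞) / ((N : ℝ≥0∞) + 1)) ∂m := lintegral_mono fun x => row N _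
      _ = ((N : ℝ≥0∞) / ((N : ℝ≥0∞) + 1)) := by simp
      _ < 1 := div_succ_lt N
  have trow : ∀ j, m.map i {j} ≠ 0 → Tendsto (fun N => ∫⁻ y, q N (j, i y) ∂n) atTop (𝓝 1) := by
    intro j hj
    rw [← P1] at hj
    rw [← (cdens_row P j).2 hj, ← Rn fun l => cdens P (j, l)]
    refine tendsto_lintegral_of_dominated_convergence (fun y => cdens P (j, i y))
      (fun N => (mN fun l => q N (j, l)).comp hi) (fun N => ae_of_all _ fun y => qle' N _) ?_
      (ae_of_all _ fun y => by simp_rw [hq]; exact tendsto_qv_apx hc _)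
    rw [Rn fun l => cdens P (j, l), (cdens_row P j).2 hj]; exact one_ne_top
  have tcol : ∀ l, n.map i {l} ≠ 0 → Tendsto (fun N => ∫⁻ x, q N (i x, l) ∂m) atTop (𝓝 1) := by
    intro l hl
    rw [← P2] at hl
    rw [← (cdens_col P l).2 hl, ← Rm fun j => cdens P (j, l)]
    refine tendsto_lintegral_of_dominated_convergence (fun x => cdens P (i x, l))
      (fun N => (mN fun j => q N (j, l)).comp hi) (fun N => ae_of_all _ fun y => qle' N _) ?_
      (ae_of_all _ fun y => by simp_rw [hq]; exact tendsto_qv_apx hc _)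
    rw [Rm fun j => cdens P (j, l), (cdens_col P l).2 hl]; exact one_ne_top
  have T1 := tail_tendsto m hi (F := fun x => edist x x₀ ^ p) (by fun_prop) hm
    (fun N j => ∫⁻ y, q N (j, i y) ∂n) trow
  have T2 := tail_tendsto n hi (F := fun y => edist x₀ y ^ p) (by fun_prop) hn
    (fun N l => ∫⁻ x, q N (i x, l) ∂m) tcol
  have T3 := ENNReal.Tendsto.const_mul (a := (2 : ℝ≥0∞) ^ (p - 1)) (T1.add T2)
    (Or.inr (ENNReal.rpow_ne_top_of_nonneg (by linarith) (by simp)))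
  rw [add_zero, mul_zero] at T3
  obtain ⟨N, hN⟩ := (T3.eventually_le_const (pos_iff_ne_zero.2 hε)).exists
  refine ⟨N, apx (cdens P) N, ?_⟩
  rw [← hq N]
  refine ⟨row1 N, col1 N, hI N, ?_⟩
  refine (complDens_cost hp (u := fun z => q N (i z.1, i z.2))
    ((mNN (q N)).comp (hi.prodMap hi)) m n (fun x => row1 N (i x)) (fun y => col1 N (i y)) (hI N) x₀).trans ?_
  refine add_le_add ?_ hN
  set H : ℕ × ℕ → ℝ≥0∞ := fun jl => ⨆ (z : B × B) (_ : i z.1 = jl.1 ∧ i z.2 = jl.2),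
    edist z.1 z.2 ^ p with hH
  calc ∫⁻ z, edist z.1 z.2 ^ p * q N (i z.1, i z.2) ∂(m.prod n)
      ≤ ∫⁻ z, (fun w => H w * cdens P w) (Prod.map i i z) ∂(m.prod n) := by
        refine lintegral_mono fun z => ?_
        refine mul_le_mul' ?_ (qle' N _)
        exact le_iSup₂_of_le (f := fun (z : B × B) (_ : i z.1 = _ ∧ i z.2 = _) => edist z.1 z.2 ^ p)
          z ⟨rfl, rfl⟩ le_rfl
    _ = ∫⁻ w, H w * cdens P w ∂((P.map Prod.fst).prod (P.map Prod.snd)) := by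
        rw [P1, P2, Measure.map_prod_map _ _ hi hi, lintegral_map (mNN _) (hi.prodMap hi)]
    _ = ∫⁻ w, H w ∂P := cdens_lintegral P H
    _ = ∫⁻ z, H (i z.1, i z.2) ∂π := by
        rw [hP, lintegral_map (mNN _) (hi.prodMap hi)]; rfl
    _ ≤ _ := by
        refine lintegral_mono fun z => iSup₂_le fun w hw => ?_
        gcongr
        calc edist w.1 w.2 ≤ edist w.1 z.1 + edist z.1 z.2 + edist z.2 w.2 := by
              exact (edist_triangle4 _ _ _ _)
          _ ≤ δ + edist z.1 z.2 + δ := by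
              gcongr
              · exact hδ _ _ hw.1
              · exact hδ _ _ hw.2.symm
          _ = _ := by rw [two_mul]; abel


section
variable {B : Type*} [MetricSpace B] [SecondCountableTopology B]
  [MeasurableSpace B] [BorelSpace B]

/-- Validity of a discrete density candidate. -/
def Valid (i : B → ℕ) (N : ℕ) (a : ℕ × ℕ →₀ ℕ) (m n : Measure B) : Prop :=
  (∀ j, ∫⁻ y, qv N a (j, i y) ∂n ≤ 1) ∧ (∀ j, ∫⁻ x, qv N a (i x, j) ∂m ≤ 1) ∧
      ∫⁻ x, ∫⁻ y, qv N a (i x, i y) ∂n ∂m < 1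

open Classical in
/-- The density used by the selector. -/
def selD (i : B → ℕ) (N : ℕ) (a : ℕ × ℕ →₀ ℕ) (m n : Measure B) (z : B × B) : ℝ≥0∞ :=
  if Valid i N a m n then complDens (fun z => qv N a (i z.1, i z.2)) m n z else 1

lemma measurable_qv_idx {i : B → ℕ} (hi : Measurable i) (N : ℕ) (a : ℕ × ℕ →₀ ℕ) :
    Measurable fun z : B × B => qv N a (i z.1, i z.2) :=
  (measurable_of_countable (qv N a)).comp (hi.prodMap hi)

lemma selD_cpl {i : B → ℕ} (hi : Measurable i) (N : ℕ) (a : ℕ × ℕ →₀ ℕ) (m n : Measure B)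
    [IsProbabilityMeasure m] [IsProbabilityMeasure n] :
    (m.prod n).withDensity (selD i N a m n) ∈ Cpl m n := by
  classical
  by_cases h : Valid i N a m n
  · have : selD i N a m n = complDens (fun z => qv N a (i z.1, i z.2)) m n := by
      ext z; simp [selD, h]
    rw [this]
    exact complDens_cpl (measurable_qv_idx hi N a) m n (fun x => h.1 (i x)) (fun y => h.2.1 (i y)) h.2.2
  · have : selD i N a m n = 1 := by
      ext z; simp [selD, h]
    rw [this, withDensity_one]
    exact ⟨by simp, by simp⟩

variable {Ω : Type*} [MeasurableSpace Ω]

lemma measurableSet_valid {i : B → ℕ} (hi : Measurable i) (N : ℕ) (a : ℕ × ℕ →₀ ℕ)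
    (κ₁ κ₂ : Kernel Ω B) [IsMarkovKernel κ₁] [IsMarkovKernel κ₂] :
    MeasurableSet {ω | Valid i N a (κ₁ ω) (κ₂ ω)} := by
  have hu := measurable_qv_idx hi N a
  have h1 : ∀ j, Measurable fun ω => ∫⁻ y, qv N a (j, i y) ∂(κ₂ ω) := fun j =>
    ((measurable_from_nat (f := fun l => qv N a (j, l))).comp hi).lintegral_kernel
  have h2 : ∀ j, Measurable fun ω => ∫⁻ x, qv N a (i x, j) ∂(κ₁ ω) := fun j =>
    ((measurable_from_nat (f := fun l => qv N a (l, j))).comp hi).lintegral_kernel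
  have h3 : Measurable fun ω => ∫⁻ x, ∫⁻ y, qv N a (i x, i y) ∂(κ₂ ω) ∂(κ₁ ω) := by
    have h4 : Measurable fun w : Ω × B => ∫⁻ y, qv N a (i w.2, i y) ∂(κ₂.prodMkRight B w) :=
      Measurable.lintegral_kernel_prod_right' (κ := κ₂.prodMkRight B)
        (f := fun w : (Ω × B) × B => qv N a (i w.1.2, i w.2)) (by fun_prop)
    exact Measurable.lintegral_kernel_prod_right' (κ := κ₁) h4
  have : {ω | Valid i N a (κ₁ ω) (κ₂ ω)} =
      (⋂ j, {ω | ∫⁻ y, qv N a (j, i y) ∂(κ₂ ω) ≤ 1}) ∩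
      ((⋂ j, {ω | ∫⁻ x, qv N a (i x, j) ∂(κ₁ ω) ≤ 1}) ∩
      {ω | ∫⁻ x, ∫⁻ y, qv N a (i x, i y) ∂(κ₂ ω) ∂(κ₁ ω) < 1}) := by
    ext ω; simp [Valid]
  rw [this]
  exact (MeasurableSet.iInter fun j => measurableSet_le (h1 j) measurable_const).inter
    ((MeasurableSet.iInter fun j => measurableSet_le (h2 j) measurable_const).inter
      (measurableSet_lt h3 measurable_const))

lemma measurable_selD {i : B → ℕ} (hi : Measurable i) (N : ℕ) (a : ℕ × ℕ →₀ ℕ)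
    (κ₁ κ₂ : Kernel Ω B) [IsMarkovKernel κ₁] [IsMarkovKernel κ₂] :
    Measurable fun w : Ω × (B × B) => selD i N a (κ₁ w.1) (κ₂ w.1) w.2 := by
  classical
  have hu := measurable_qv_idx hi N a
  unfold selD
  refine Measurable.ite ((measurableSet_valid hi N a κ₁ κ₂).preimage measurable_fst) ?_
    measurable_const
  unfold complDens
  have h4 : Measurable fun w : Ω × B => ∫⁻ y, qv N a (i w.2, i y) ∂(κ₂ w.1) :=
      Measurable.lintegral_kernel_prod_right' (κ := κ₂.prodMkRight B)
        (f := fun w : (Ω × B) × B => qv N a (i w.1.2, i w.2)) (by fun_prop)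
  have h5 : Measurable fun w : Ω × B => ∫⁻ x, qv N a (i x, i w.2) ∂(κ₁ w.1) :=
      Measurable.lintegral_kernel_prod_right' (κ := κ₁.prodMkRight B)
        (f := fun w : (Ω × B) × B => qv N a (i w.2, i w.1.2)) (by fun_prop)
  have h3 : Measurable fun ω => ∫⁻ x, ∫⁻ y, qv N a (i x, i y) ∂(κ₂ ω) ∂(κ₁ ω) :=
    Measurable.lintegral_kernel_prod_right' (κ := κ₁) h4
  have h4' : Measurable fun w : Ω × (B × B) => ∫⁻ y, qv N a (i w.2.1, i y) ∂(κ₂ w.1) :=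
    h4.comp (f := fun w : Ω × (B × B) => (w.1, w.2.1)) (by fun_prop)
  have h5' : Measurable fun w : Ω × (B × B) => ∫⁻ x, qv N a (i x, i w.2.2) ∂(κ₁ w.1) :=
    h5.comp (f := fun w : Ω × (B × B) => (w.1, w.2.2)) (by fun_prop)
  have h3' : Measurable fun w : Ω × (B × B) => ∫⁻ x, ∫⁻ y, qv N a (i x, i y) ∂(κ₂ w.1) ∂(κ₁ w.1) :=
    h3.comp (f := fun w : Ω × (B × B) => w.1) measurable_fst
  exact (hu.comp measurable_snd).add (((measurable_const.sub h4').mul (measurable_const.sub h5')).mul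
    (measurable_const.sub h3').inv)

lemma infcost_le {p : ℝ} (hp : 1 ≤ p) (m n : Measure B) [IsProbabilityMeasure m]
    [IsProbabilityMeasure n] (hn : MemPp p edist n) {i : ℕ → B → ℕ} (hi : ∀ k, Measurable (i k))
    (hδ : ∀ (k : ℕ) x y, i k x = i k y → edist x y ≤ ((k : ℝ≥0∞) + 1)⁻¹) :
    (⨅ (k : ℕ) (N : ℕ) (a : ℕ × ℕ →₀ ℕ),
      ∫⁻ z, edist z.1 z.2 ^ p ∂((m.prod n).withDensity (selD (i k) N a m n))) ≤
      Wp p edist m n ^ p := by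
  classical
  have p0 : 0 < p := by linarith
  obtain ⟨-, x₀, hx₀⟩ := hn
  set V := (⨅ (k : ℕ) (N : ℕ) (a : ℕ × ℕ →₀ ℕ),
      ∫⁻ z, edist z.1 z.2 ^ p ∂((m.prod n).withDensity (selD (i k) N a m n))) with hV
  suffices h : V ^ (1 / p) ≤ Wp p edist m n by
    calc V = (V ^ (1 / p)) ^ p := by rw [← ENNReal.rpow_mul]; field_simp; simp
      _ ≤ _ := by gcongr
  refine le_iInf₂ fun π hπ => ?_
  by_cases hC : ∫⁻ z, edist z.1 z.2 ^ p ∂π = ∞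
  · rw [hC, ENNReal.top_rpow_of_pos (by positivity)]; exact le_top
  have pπ := cpl_isProb hπ
  have hm : ∫⁻ x, edist x x₀ ^ p ∂m ≠ ∞ := by
    rw [← hπ.1, lintegral_map (by fun_prop) measurable_fst]
    have h2 : ∫⁻ z, edist x₀ z.2 ^ p ∂π = ∫⁻ y, edist x₀ y ^ p ∂n := by
      rw [← hπ.2, lintegral_map (by fun_prop) measurable_snd]
    refine ne_top_of_le_ne_top (b := 2 ^ (p - 1) * (∫⁻ z, edist z.1 z.2 ^ p ∂π +
      ∫⁻ z, edist x₀ z.2 ^ p ∂π)) ?_ ?_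
    · refine ENNReal.mul_ne_top (ENNReal.rpow_ne_top_of_nonneg (by linarith) (by simp)) ?_
      rw [h2]; exact ENNReal.add_ne_top.2 ⟨hC, hx₀⟩
    · rw [← lintegral_add_left (by fun_prop), ← lintegral_const_mul _ (by fun_prop)]
      refine lintegral_mono fun z => ?_
      refine le_trans ?_ (ENNReal.rpow_add_le_mul_rpow_add_rpow _ _ hp)
      gcongr
      rw [edist_comm x₀]
      exact edist_triangle _ _ _
  have key : ∀ k : ℕ, V ≤ ∫⁻ z, (edist z.1 z.2 + 2 * ((k : ℝ≥0∞) + 1)⁻¹) ^ p ∂π := by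
    intro k
    refine ENNReal.le_of_forall_pos_le_add fun ε hε _ => ?_
    obtain ⟨N, a, h1, h2, h3, h4⟩ := exists_approx hp m n x₀ hm hx₀ hπ (hi k) (hδ k)
      (ε := (ε : ℝ≥0∞)) (by exact_mod_cast hε.ne')
    have : selD (i k) N a m n = complDens (fun z => qv N a (i k z.1, i k z.2)) m n := by
      ext z; simp only [selD]; rw [if_pos]; exact ⟨h1, h2, h3⟩
    rw [← this] at h4
    exact (iInf_le_of_le k (iInf_le_of_le N (iInf_le_of_le a le_rfl))).trans h4
  have key2 : ∀ k : ℕ, V ^ (1 / p) ≤ (∫⁻ z, edist z.1 z.2 ^ p ∂π) ^ (1 / p) +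
      2 * ((k : ℝ≥0∞) + 1)⁻¹ := by
    intro k
    calc V ^ (1 / p) ≤ (∫⁻ z, (edist z.1 z.2 + 2 * ((k : ℝ≥0∞) + 1)⁻¹) ^ p ∂π) ^ (1 / p) := by
          gcongr; exact key k
      _ ≤ (∫⁻ z, edist z.1 z.2 ^ p ∂π) ^ (1 / p) +
          (∫⁻ z, (2 * ((k : ℝ≥0∞) + 1)⁻¹) ^ p ∂π) ^ (1 / p) :=
        ENNReal.lintegral_Lp_add_le (f := fun z : B × B => edist z.1 z.2)
          (g := fun _ => 2 * ((k : ℝ≥0∞) + 1)⁻¹) (by fun_prop) (by fun_prop) hp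
      _ = _ := by
        congr 1
        rw [lintegral_const, measure_univ, mul_one, ← ENNReal.rpow_mul]
        field_simp; simp
  have lim : Tendsto (fun k : ℕ => (∫⁻ z, edist z.1 z.2 ^ p ∂π) ^ (1 / p) +
      2 * ((k : ℝ≥0∞) + 1)⁻¹) atTop (𝓝 ((∫⁻ z, edist z.1 z.2 ^ p ∂π) ^ (1 / p) + 2 * 0)) := by
    refine tendsto_const_nhds.add (ENNReal.Tendsto.const_mul ?_ (Or.inr (by simp)))
    have := (tendsto_add_atTop_iff_nat (f := fun n : ℕ => ((n : ℝ≥0∞))⁻¹) 1).2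
      ENNReal.tendsto_inv_nat_nhds_zero
    simpa using this
  rw [mul_zero, add_zero] at lim
  exact ge_of_tendsto' lim key2

lemma exists_selector [Nonempty B] {p : ℝ} (hp : 1 ≤ p) (κ₁ κ₂ : Kernel Ω B) [IsMarkovKernel κ₁]
    [IsMarkovKernel κ₂] {ε : ℝ≥0∞} (hε : ε ≠ 0) :
    ∃ K : Kernel Ω (B × B), IsMarkovKernel K ∧ ∀ ω, K ω ∈ Cpl (κ₁ ω) (κ₂ ω) ∧
      (MemPp p edist (κ₂ ω) →
        ∫⁻ z, edist z.1 z.2 ^ p ∂(K ω) ≤ Wp p edist (κ₁ ω) (κ₂ ω) ^ p + ε) := by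
  classical
  choose i hi hδ using fun k : ℕ => exists_idx (B := B) (((k : ℝ≥0∞) + 1)⁻¹) (by simp)
  obtain ⟨e, he⟩ := exists_surjective_nat (ℕ × ℕ × (ℕ × ℕ →₀ ℕ))
  set D : ℕ → Ω × (B × B) → ℝ≥0∞ := fun n w =>
    selD (i (e n).1) (e n).2.1 (e n).2.2 (κ₁ w.1) (κ₂ w.1) w.2 with hD
  have mD : ∀ n, Measurable (D n) := fun n => measurable_selD (hi _) _ _ κ₁ κ₂
  set cost : ℕ → Ω → ℝ≥0∞ := fun n ω => ∫⁻ z, edist z.1 z.2 ^ p * D n (ω, z) ∂((κ₁ ×ₖ κ₂) ω)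
    with hcost
  have mcost : ∀ n, Measurable (cost n) := fun n => by
    refine Measurable.lintegral_kernel_prod_right' (κ := κ₁ ×ₖ κ₂)
      (f := fun w : Ω × (B × B) => edist w.2.1 w.2.2 ^ p * D n w) ?_
    have := mD n
    fun_prop
  have hce : ∀ n ω, cost n ω = ∫⁻ z, edist z.1 z.2 ^ p ∂(((κ₁ ω).prod (κ₂ ω)).withDensity
      (selD (i (e n).1) (e n).2.1 (e n).2.2 (κ₁ ω) (κ₂ ω))) := by
    intro n ω
    have hm : Measurable (selD (i (e n).1) (e n).2.1 (e n).2.2 (κ₁ ω) (κ₂ ω)) :=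
      (mD n).comp (measurable_prodMk_left (x := ω))
    rw [lintegral_withDensity_eq_lintegral_mul₀ hm.aemeasurable (by fun_prop)]
    simp only [hcost, Kernel.prod_apply]
    refine lintegral_congr fun z => ?_
    rw [mul_comm]; rfl
  set V : Ω → ℝ≥0∞ := fun ω => ⨅ n, cost n ω with hV
  have mV : Measurable V := Measurable.iInf mcost
  have ex : ∀ ω, ∃ n, cost n ω < V ω + ε ∨ V ω = ∞ := by
    intro ω
    by_cases h : V ω = ∞
    · exact ⟨0, Or.inr h⟩
    · obtain ⟨n, hn⟩ := iInf_lt_iff.1 (ENNReal.lt_add_right h hε)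
      exact ⟨n, Or.inl hn⟩
  set t : Ω → ℕ := fun ω => Nat.find (ex ω) with ht
  have mt : Measurable t := measurable_find ex fun n =>
    (measurableSet_lt (mcost n) (mV.add_const ε)).union (mV (measurableSet_singleton _))
  have ct : ∀ ω, cost (t ω) ω ≤ V ω + ε := fun ω => by
    rcases Nat.find_spec (ex ω) with h | h
    · exact h.le
    · rw [h, top_add]; exact le_top
  have mE : Measurable fun w : Ω × (B × B) => D (t w.1) w := by
    have h1 : Measurable fun q : ℕ × (Ω × (B × B)) => D q.1 q.2 :=
      measurable_from_prod_countable_right mD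
    exact h1.comp (f := fun w : Ω × (B × B) => (t w.1, w)) (by fun_prop)
  have hK : ∀ ω, Kernel.withDensity (κ₁ ×ₖ κ₂) (fun ω z => D (t ω) (ω, z)) ω =
      ((κ₁ ω).prod (κ₂ ω)).withDensity
      (selD (i (e (t ω)).1) (e (t ω)).2.1 (e (t ω)).2.2 (κ₁ ω) (κ₂ ω)) := by
    intro ω
    rw [Kernel.withDensity_apply _ mE, Kernel.prod_apply]
  have hcpl : ∀ ω, Kernel.withDensity (κ₁ ×ₖ κ₂) (fun ω z => D (t ω) (ω, z)) ω ∈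
      Cpl (κ₁ ω) (κ₂ ω) := fun ω => by
    rw [hK]; exact selD_cpl (hi _) _ _ _ _
  refine ⟨Kernel.withDensity (κ₁ ×ₖ κ₂) (fun ω z => D (t ω) (ω, z)), ⟨fun ω => cpl_isProb (hcpl ω)⟩,
    fun ω => ⟨hcpl ω, fun hmem => ?_⟩⟩
  rw [hK, ← hce]
  refine (ct ω).trans (add_le_add_left ?_ _)
  refine le_trans ?_ (infcost_le hp (κ₁ ω) (κ₂ ω) hmem hi hδ)
  refine le_iInf fun k => le_iInf fun N => le_iInf fun a => ?_
  obtain ⟨n, hn⟩ := he (k, N, a)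
  refine (iInf_le _ n).trans ?_
  rw [hce, hn]
end


section
variable {Ω T C : Type*} [MeasurableSpace Ω] [MeasurableSpace T] [MeasurableSpace C]

/-- `κ` is a version of the conditional barycenter of `k` given `Y` under `Γ`. -/
def IsCB (Γ : Measure Ω) (Y : Ω → T) (k : Ω → Measure C) (κ : Kernel T C) : Prop :=
  ∀ h : T × C → ℝ≥0∞, Measurable h →
    ∫⁻ t, ∫⁻ c, h (t, c) ∂(κ t) ∂(Γ.map Y) = ∫⁻ ω, ∫⁻ c, h (Y ω, c) ∂(k ω) ∂Γ

lemma IsCB.congr {Γ : Measure Ω} {Y : Ω → T} {k k' : Ω → Measure C} {κ : Kernel T C}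
    (h : IsCB Γ Y k κ) (hk : k =ᵐ[Γ] k') : IsCB Γ Y k' κ := by
  intro f hf
  rw [h f hf]
  refine lintegral_congr_ae ?_
  filter_upwards [hk] with ω hω
  rw [hω]

lemma IsCB.map {D : Type*} [MeasurableSpace D] {Γ : Measure Ω} {Y : Ω → T} {k : Ω → Measure C}
    {κ : Kernel T C} (h : IsCB Γ Y k κ) {f : C → D} (hf : Measurable f) :
    IsCB Γ Y (fun ω => (k ω).map f) (κ.map f) := by
  intro g hg
  have := h (fun w => g (w.1, f w.2)) (by fun_prop)
  calc _ = _ := ?_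
    _ = _ := this
    _ = _ := ?_
  · refine lintegral_congr fun t => ?_
    rw [Kernel.map_apply _ hf, lintegral_map (by fun_prop) hf]
  · refine lintegral_congr fun ω => ?_
    rw [lintegral_map (by fun_prop) hf]

lemma IsCB.unique [MeasurableSpace.CountablyGenerated C] {Γ : Measure Ω} [IsProbabilityMeasure Γ]
    {Y : Ω → T} {k : Ω → Measure C} {κ κ' : Kernel T C} [IsMarkovKernel κ] [IsMarkovKernel κ']
    (h : IsCB Γ Y k κ) (h' : IsCB Γ Y k κ') : κ =ᵐ[Γ.map Y] κ' := by
  refine Kernel.ae_eq_of_compProd_eq ?_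
  ext s hs
  have := (h (s.indicator 1) (measurable_one.indicator hs)).trans
    (h' (s.indicator 1) (measurable_one.indicator hs)).symm
  rw [← Measure.lintegral_compProd (measurable_one.indicator hs),
    ← Measure.lintegral_compProd (measurable_one.indicator hs)] at this
  simpa [lintegral_indicator_one hs] using this

lemma exists_isCB [StandardBorelSpace C] [Nonempty C] (Γ : Measure Ω) [IsProbabilityMeasure Γ]
    {Y : Ω → T} (hY : Measurable Y) (K : Kernel Ω C) [IsMarkovKernel K] :
    ∃ κ : Kernel T C, IsMarkovKernel κ ∧ IsCB Γ Y K κ := by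
  have hm : Measurable (Prod.map Y id : Ω × C → T × C) := hY.prodMap measurable_id
  set ρ := (Γ ⊗ₘ K).map (Prod.map Y id : Ω × C → T × C) with hρ
  have : IsProbabilityMeasure ρ := Measure.isProbabilityMeasure_map hm.aemeasurable
  have hf : ρ.fst = Γ.map Y := by
    rw [Measure.fst, hρ, Measure.map_map measurable_fst hm]
    have : (Prod.fst ∘ (Prod.map Y id : Ω × C → T × C)) = Y ∘ Prod.fst := rfl
    rw [this, ← Measure.map_map hY measurable_fst]
    congr 1
    exact Measure.fst_compProd Γ K
  have hd : Γ.map Y ⊗ₘ ρ.condKernel = ρ := by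
    rw [← hf]; exact ρ.disintegrate ρ.condKernel
  have : IsProbabilityMeasure (Γ.map Y) := Measure.isProbabilityMeasure_map hY.aemeasurable
  refine ⟨ρ.condKernel, inferInstance, fun h hh => ?_⟩
  rw [← Measure.lintegral_compProd hh, hd, hρ, lintegral_map hh hm, Measure.lintegral_compProd
    (f := fun a => h (Prod.map Y id a)) (hh.comp hm)]
  rfl

lemma isCB_comp (Γ : Measure Ω) {Y : Ω → T} (hY : Measurable Y) (κ : Kernel T C)
    [IsMarkovKernel κ] : IsCB Γ Y (fun ω => κ (Y ω)) κ := by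
  intro h hh
  rw [lintegral_map hh.lintegral_kernel_prod_right' hY]

lemma isCB_of_sets (Γ : Measure Ω) [IsProbabilityMeasure Γ] {Y : Ω → T} (hY : Measurable Y)
    (K : Kernel Ω C) [IsMarkovKernel K] (κ : Kernel T C) [IsMarkovKernel κ]
    (hs : ∀ S, MeasurableSet S → ∀ E, MeasurableSet E →
      ∫⁻ ω in Y ⁻¹' S, κ (Y ω) E ∂Γ = ∫⁻ ω in Y ⁻¹' S, K ω E ∂Γ) : IsCB Γ Y K κ := by
  have hm : Measurable (Prod.map Y id : Ω × C → T × C) := hY.prodMap measurable_id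
  have : IsProbabilityMeasure (Γ.map Y) := Measure.isProbabilityMeasure_map hY.aemeasurable
  have key : Γ.map Y ⊗ₘ κ = (Γ ⊗ₘ K).map (Prod.map Y id : Ω × C → T × C) := by
    refine Measure.ext_prod fun {S E} hS hE => ?_
    rw [Measure.compProd_apply_prod hS hE, Measure.map_apply hm (hS.prod hE),
      setLIntegral_map hS (κ.measurable_coe hE) hY, hs S hS E hE]
    have : (Prod.map Y id : Ω × C → T × C) ⁻¹' (S ×ˢ E) = (Y ⁻¹' S) ×ˢ E := by ext; simp
    rw [this, Measure.compProd_apply_prod (hY hS) hE]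
  intro h hh
  rw [← Measure.lintegral_compProd hh, key, lintegral_map hh hm, Measure.lintegral_compProd
    (f := fun a => h (Prod.map Y id a)) (hh.comp hm)]
  rfl

lemma IsCB.sets {Γ : Measure Ω} {Y : Ω → T} (hY : Measurable Y) {k : Ω → Measure C}
    {κ : Kernel T C} (h : IsCB Γ Y k κ) {S : Set T} (hS : MeasurableSet S) {E : Set C}
    (hE : MeasurableSet E) :
    ∫⁻ ω in Y ⁻¹' S, κ (Y ω) E ∂Γ = ∫⁻ ω in Y ⁻¹' S, k ω E ∂Γ := by
  have h1 := h ((S ×ˢ E).indicator 1) (measurable_one.indicator (hS.prod hE))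
  have e : ∀ (t : T) (m : Measure C), ∫⁻ c, (S ×ˢ E).indicator 1 (t, c) ∂m =
      S.indicator (fun _ => m E) t := by
    intro t m
    by_cases ht : t ∈ S
    · rw [Set.indicator_of_mem ht, ← lintegral_indicator_one hE]
      refine lintegral_congr fun c => ?_
      by_cases hc : c ∈ E <;> simp [ht, hc]
    · simp [ht]
  simp_rw [e] at h1
  have h2 : Measurable fun t => S.indicator (fun _ => κ t E) t :=
    Measurable.indicator (κ.measurable_coe hE) hS
  rw [lintegral_map h2 hY] at h1
  rw [← lintegral_indicator (hY hS), ← lintegral_indicator (hY hS)]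
  exact h1
end

section
variable {A B : Type*} [MeasurableSpace A] [MeasurableSpace B]

open Classical in
/-- The second coordinate of `A × Measure B`, made into a Markov kernel. -/
def clean (A : Type*) {B : Type*} [MeasurableSpace A] [MeasurableSpace B] (b₀ : B) :
    Kernel (A × Measure B) B where
  toFun z := if z.2 Set.univ = 1 then z.2 else Measure.dirac b₀
  measurable' := by
    have : MeasurableSet {z : A × Measure B | z.2 Set.univ = 1} :=
      ((Measure.measurable_coe MeasurableSet.univ).comp measurable_snd) (measurableSet_singleton 1)
    exact Measurable.ite this (measurable_snd (α := A) (β := Measure B))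
      (measurable_const (a := Measure.dirac b₀))

open Classical in
lemma clean_apply (b₀ : B) (z : A × Measure B) :
    clean A b₀ z = if z.2 Set.univ = 1 then z.2 else Measure.dirac b₀ := rfl

instance instMarkovClean (b₀ : B) : IsMarkovKernel (clean A b₀) := by
  refine ⟨fun z => ?_⟩
  rw [clean_apply]
  split_ifs with h
  · exact ⟨h⟩
  · infer_instance

lemma clean_eq (b₀ : B) {z : A × Measure B} (h : IsProbabilityMeasure z.2) :
    clean A b₀ z = z.2 := by
  rw [clean_apply, if_pos measure_univ]
end


lemma glue_aux {E F : Type*} [MeasurableSpace E] [MeasurableSpace F]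
    (γ : Measure (E × F)) [IsProbabilityMeasure γ] {G H : Type*} [MeasurableSpace G]
    [MeasurableSpace H] (K : Kernel E G) (L : Kernel F H) [IsMarkovKernel K] [IsMarkovKernel L] :
    (∀ f : (E × F) × G → ℝ≥0∞, Measurable f →
      ∫⁻ ω, f (ω.1, ω.2.1) ∂(γ ⊗ₘ (K.comap Prod.fst measurable_fst ×ₖ L.comap Prod.snd measurable_snd))
        = ∫⁻ z, ∫⁻ x, f (z, x) ∂(K z.1) ∂γ) ∧
    (∀ f : (E × F) × H → ℝ≥0∞, Measurable f →
      ∫⁻ ω, f (ω.1, ω.2.2) ∂(γ ⊗ₘ (K.comap Prod.fst measurable_fst ×ₖ L.comap Prod.snd measurable_snd))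
        = ∫⁻ z, ∫⁻ y, f (z, y) ∂(L z.2) ∂γ) := by
  constructor
  · intro f hf
    rw [Measure.lintegral_compProd (f := fun ω : (E × F) × (G × H) => f (ω.1, ω.2.1)) (by fun_prop)]
    refine lintegral_congr fun z => ?_
    rw [Kernel.prod_apply, Kernel.comap_apply, Kernel.comap_apply]
    exact (measurePreserving_fst (μ := K z.1) (ν := L z.2)).lintegral_comp
      (f := fun x => f (z, x)) (by fun_prop)
  · intro f hf
    rw [Measure.lintegral_compProd (f := fun ω : (E × F) × (G × H) => f (ω.1, ω.2.2)) (by fun_prop)]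
    refine lintegral_congr fun z => ?_
    rw [Kernel.prod_apply, Kernel.comap_apply, Kernel.comap_apply]
    exact (measurePreserving_snd (μ := K z.1) (ν := L z.2)).lintegral_comp
      (f := fun x => f (z, x)) (by fun_prop)

/-- Disintegration of a coupling with respect to its second coordinate. -/
lemma exists_disint_swap {A B : Type*} [MeasurableSpace A] [MeasurableSpace B]
    [StandardBorelSpace A] [Nonempty A] [StandardBorelSpace B] [Nonempty B]
    {μ μ' : Measure (A × Measure B)} [IsProbabilityMeasure μ]
    (hμ : ∀ᵐ z ∂μ, IsProbabilityMeasure z.2)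
    {α : Measure ((A × Measure B) × (A × Measure B))} (hα : α ∈ Cpl μ μ') :
    ∃ K : Kernel (A × Measure B) (A × Measure B), IsMarkovKernel K ∧
      ∀ f : (A × Measure B) × (A × Measure B) → ℝ≥0∞, Measurable f →
        ∫⁻ z, f z ∂α = ∫⁻ x', ∫⁻ x, f (x, x') ∂(K x') ∂μ' := by
  have := cpl_isProb hα
  have : IsProbabilityMeasure (α.map Prod.swap) :=
    Measure.isProbabilityMeasure_map measurable_swap.aemeasurable
  have hsnd : (α.map Prod.swap).map Prod.snd = μ := by
    rw [Measure.map_map measurable_snd measurable_swap]; exact hα.1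
  have hfst : (α.map Prod.swap).fst = μ' := by
    rw [Measure.fst, Measure.map_map measurable_fst measurable_swap]; exact hα.2
  obtain ⟨K, hK, h⟩ := exists_disint (α.map Prod.swap) (by
    rw [← hsnd] at hμ
    exact ae_of_ae_map measurable_snd.aemeasurable hμ)
  rw [hfst] at h
  have : IsProbabilityMeasure μ' := by
    rw [← hfst]; infer_instance
  refine ⟨K, hK, fun f hf => ?_⟩
  have hfs : Measurable fun z : (A × Measure B) × (A × Measure B) => f z.swap :=
    hf.comp measurable_swap
  have h2 : ∫⁻ z, f z ∂α = ∫⁻ z, f z.swap ∂(α.map Prod.swap) := by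
    rw [lintegral_map hfs measurable_swap]; simp
  rw [h2, h, Measure.lintegral_compProd hfs]
  rfl

lemma exists_glue {A B : Type*} [MeasurableSpace A] [MeasurableSpace B]
    [StandardBorelSpace A] [Nonempty A] [StandardBorelSpace B] [Nonempty B]
    {μ μ' ν ν' : Measure (A × Measure B)} [IsProbabilityMeasure μ] [IsProbabilityMeasure μ']
    [IsProbabilityMeasure ν]
    (hμ : ∀ᵐ z ∂μ, IsProbabilityMeasure z.2) (hν : ∀ᵐ z ∂ν, IsProbabilityMeasure z.2)
    {α γ β : Measure ((A × Measure B) × (A × Measure B))}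
    (hα : α ∈ Cpl μ μ') (hγ : γ ∈ Cpl μ' ν') (hβ : β ∈ Cpl ν ν') :
    ∃ (Γ : Measure (((A × Measure B) × (A × Measure B)) × ((A × Measure B) × (A × Measure B))))
      (L : Kernel (A × Measure B) (A × Measure B)), IsProbabilityMeasure Γ ∧ IsMarkovKernel L ∧
      Γ.map Prod.fst = γ ∧ Γ.map (fun ω => (ω.2.1, ω.1.1)) = α ∧
      Γ.map (fun ω => (ω.2.2, ω.1.2)) = β ∧
      ∀ f : ((A × Measure B) × (A × Measure B)) × (A × Measure B) → ℝ≥0∞, Measurable f →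
        ∫⁻ ω, f (ω.1, ω.2.2) ∂Γ = ∫⁻ z, ∫⁻ y, f (z, y) ∂(L z.2) ∂γ := by
  have := cpl_isProb hγ
  obtain ⟨K, hK, h1⟩ := exists_disint_swap hμ hα
  obtain ⟨L, hL, h2⟩ := exists_disint_swap hν hβ
  obtain ⟨g1, g2⟩ := glue_aux γ K L
  refine ⟨γ ⊗ₘ (K.comap Prod.fst measurable_fst ×ₖ L.comap Prod.snd measurable_snd), L,
    inferInstance, hL, Measure.fst_compProd _ _, ?_, ?_, g2⟩
  · refine Measure.ext_of_lintegral _ fun f hf => ?_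
    rw [lintegral_map hf (by fun_prop), h1 f hf, ← hγ.1]
    have h3 : Measurable fun x' => ∫⁻ x, f (x, x') ∂(K x') :=
      (hf.comp measurable_swap).lintegral_kernel_prod_right'
    rw [lintegral_map h3 measurable_fst]
    exact g1 (fun w => f (w.2, w.1.1)) (by fun_prop)
  · refine Measure.ext_of_lintegral _ fun f hf => ?_
    rw [lintegral_map hf (by fun_prop), h2 f hf, ← hγ.2]
    have h3 : Measurable fun x' => ∫⁻ x, f (x, x') ∂(L x') :=
      (hf.comp measurable_swap).lintegral_kernel_prod_right'
    rw [lintegral_map h3 measurable_snd]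
    exact g2 (fun w => f (w.2, w.1.2)) (by fun_prop)

lemma isCB_transfer {E C : Type*} [MeasurableSpace E] [MeasurableSpace C]
    {γ : Measure (E × E)} [IsProbabilityMeasure γ] {Γ : Measure ((E × E) × (E × E))} (L : Kernel E E)
    [IsMarkovKernel L]
    (hΓ : ∀ f : (E × E) × E → ℝ≥0∞, Measurable f →
        ∫⁻ ω, f (ω.1, ω.2.2) ∂Γ = ∫⁻ z, ∫⁻ y, f (z, y) ∂(L z.2) ∂γ)
    (k : Kernel (E × E) C) [IsMarkovKernel k] (κ : Kernel E C) [IsMarkovKernel κ]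
    (h : IsCB γ Prod.snd k κ) {τ : Kernel E C}
    (hτ : IsCB Γ (fun ω => ω.2.2) (fun ω => κ ω.1.2) τ) :
    IsCB Γ (fun ω => ω.2.2) (fun ω => k ω.1) τ := by
  intro f hf
  rw [hτ f hf]
  have gen : ∀ (q : Kernel (E × E) C) [IsMarkovKernel q],
      ∫⁻ ω, ∫⁻ c, f (ω.2.2, c) ∂(q ω.1) ∂Γ =
      ∫⁻ z, ∫⁻ c, (fun w : E × C => ∫⁻ y, f (y, w.2) ∂(L w.1)) (z.2, c) ∂(q z) ∂γ := by
    intro q _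
    have m1 : Measurable fun w : (E × E) × E => ∫⁻ c, f (w.2, c) ∂(q w.1) :=
      Measurable.lintegral_kernel_prod_right' (κ := q.comap Prod.fst measurable_fst)
        (f := fun v : ((E × E) × E) × C => f (v.1.2, v.2)) (by fun_prop)
    rw [hΓ _ m1]
    refine lintegral_congr fun z => ?_
    exact lintegral_lintegral_swap (μ := L z.2) (ν := q z) (f := fun y c => f (y, c)) hf.aemeasurable
  have m2 : Measurable fun w : E × C => ∫⁻ y, f (y, w.2) ∂(L w.1) :=
    Measurable.lintegral_kernel_prod_right' (κ := L.comap Prod.fst measurable_fst)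
        (f := fun v : (E × C) × E => f (v.2, v.1.2)) (by fun_prop)
  have e1 := gen k
  have e2 := gen (κ.comap Prod.snd measurable_snd)
  have e3 := h _ m2
  have e4 := isCB_comp γ measurable_snd κ _ m2
  simp only [Kernel.comap_apply] at e2
  rw [e1, e2, ← e3, ← e4]


lemma mink_two {p : ℝ} (hp : 1 ≤ p) (a₁ a₂ b₁ b₂ : ℝ≥0∞) :
    ((a₁ + a₂) ^ p + (b₁ + b₂) ^ p) ^ (1 / p) ≤
      (a₁ ^ p + b₁ ^ p) ^ (1 / p) + (a₂ ^ p + b₂ ^ p) ^ (1 / p) := by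
  have := ENNReal.Lp_add_le (Finset.univ : Finset (Fin 2)) ![a₁, b₁] ![a₂, b₂] hp
  simpa [Fin.sum_univ_two] using this

lemma rpow_inv_rpow' {p : ℝ} (hp : 1 ≤ p) (a : ℝ≥0∞) : (a ^ (1 / p)) ^ p = a := by
  have : p ≠ 0 := by linarith
  rw [← ENNReal.rpow_mul]; field_simp; simp

lemma rpow_rpow_inv' {p : ℝ} (hp : 1 ≤ p) (a : ℝ≥0∞) : (a ^ p) ^ (1 / p) = a := by
  have : p ≠ 0 := by linarith
  rw [← ENNReal.rpow_mul]; field_simp; simp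

lemma mink_three {p : ℝ} (hp : 1 ≤ p) (a₁ a₂ a₃ b₁ b₂ b₃ : ℝ≥0∞) :
    ((a₁ + a₂ + a₃) ^ p + (b₁ + b₂ + b₃) ^ p) ^ (1 / p) ≤
      (a₁ ^ p + b₁ ^ p) ^ (1 / p) + (a₂ ^ p + b₂ ^ p) ^ (1 / p) + (a₃ ^ p + b₃ ^ p) ^ (1 / p) :=
  (mink_two hp _ _ _ _).trans (add_le_add_left (mink_two hp _ _ _ _) _)

lemma lintegral_mink_three {S : Type*} [MeasurableSpace S] (m : Measure S) {p : ℝ} (hp : 1 ≤ p)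
    {f g h : S → ℝ≥0∞} (hf : Measurable f) (hg : Measurable g) (hh : Measurable h) :
    (∫⁻ s, (f s + g s + h s) ^ p ∂m) ^ (1 / p) ≤ (∫⁻ s, f s ^ p ∂m) ^ (1 / p) +
      (∫⁻ s, g s ^ p ∂m) ^ (1 / p) + (∫⁻ s, h s ^ p ∂m) ^ (1 / p) :=
  (ENNReal.lintegral_Lp_add_le (f := fun s => f s + g s) (g := h) (by fun_prop) (by fun_prop)
    hp).trans (add_le_add_left (ENNReal.lintegral_Lp_add_le (f := f) (g := g) (by fun_prop)
      (by fun_prop) hp) _)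

lemma Wp_comm_le {S : Type*} [MeasurableSpace S] (p : ℝ) {d : S → S → ℝ≥0∞}
    (hd : ∀ x y, d x y = d y x) (m n : Measure S) : Wp p d m n ≤ Wp p d n m := by
  refine le_iInf₂ fun π hπ => ?_
  have hmem : π.map Prod.swap ∈ Cpl m n := by
    constructor
    · rw [Measure.map_map measurable_fst measurable_swap]; exact hπ.2
    · rw [Measure.map_map measurable_snd measurable_swap]; exact hπ.1
  refine (iInf₂_le (π.map Prod.swap) hmem).trans ?_
  · have : π.map Prod.swap = π.map (MeasurableEquiv.prodComm : S × S ≃ᵐ S × S) := rfl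
    rw [this, lintegral_map_equiv]
    refine le_of_eq ?_
    congr 1
    refine lintegral_congr fun z => ?_
    rw [hd]; rfl

lemma Wp_comm {S : Type*} [MeasurableSpace S] (p : ℝ) {d : S → S → ℝ≥0∞}
    (hd : ∀ x y, d x y = d y x) (m n : Measure S) : Wp p d m n = Wp p d n m :=
  le_antisymm (Wp_comm_le p hd m n) (Wp_comm_le p hd n m)

section
variable {A B : Type*} [MetricSpace A] [CompleteSpace A] [SecondCountableTopology A]
  [MeasurableSpace A] [BorelSpace A] [Nonempty A]
  [MetricSpace B] [CompleteSpace B] [SecondCountableTopology B]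
  [MeasurableSpace B] [BorelSpace B] [Nonempty B]

lemma liftDist_comm (p : ℝ) (u v : A × Measure B) :
    liftDist p edist edist u v = liftDist p edist edist v u := by
  unfold liftDist
  rw [edist_comm, Wp_comm p edist_comm]

lemma AWbar_comm (p : ℝ) (m n : Measure (A × Measure B)) :
    AWbar p edist edist m n = AWbar p edist edist n m :=
  Wp_comm p (liftDist_comm p) m n

lemma cost_le {Ω : Type*} [MeasurableSpace Ω] {p : ℝ} (m : Measure Ω) [IsProbabilityMeasure m]
    {K : Kernel Ω (B × B)} {W : Ω → ℝ≥0∞} {ε : ℝ≥0∞}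
    (h : ∀ᵐ ω ∂m, ∫⁻ z, edist z.1 z.2 ^ p ∂(K ω) ≤ W ω ^ p + ε) :
    ∫⁻ ω, ∫⁻ z, edist z.1 z.2 ^ p ∂(K ω) ∂m ≤ ∫⁻ ω, W ω ^ p ∂m + ε := by
  refine (lintegral_mono_ae h).trans ?_
  rw [lintegral_add_right _ measurable_const]
  simp

/-- The glued coupling. -/
lemma core_coupling {p : ℝ} (hp : 1 ≤ p) {μ ν μ' ν' : Measure (A × Measure B)}
    [IsProbabilityMeasure μ] [IsProbabilityMeasure ν] [IsProbabilityMeasure μ']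
    [IsProbabilityMeasure ν']
    (hμ : ∀ᵐ z ∂μ, MemPp p edist z.2) (hν : ∀ᵐ z ∂ν, MemPp p edist z.2)
    (hμ' : ∀ᵐ z ∂μ', MemPp p edist z.2) (hν' : ∀ᵐ z ∂ν', MemPp p edist z.2)
    {α γ β : Measure ((A × Measure B) × (A × Measure B))}
    (hα : α ∈ Cpl μ μ') (hγ : γ ∈ Cpl μ' ν') (hβ : β ∈ Cpl ν ν')
    {η : (A × Measure B) × (A × Measure B) → Measure B} (hη : IsCondBar γ η)
    {ε : ℝ≥0∞} (hε : ε ≠ 0) :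
    ∃ σ ∈ Cpl μ ν, ∃ η', IsCondBar σ η' ∧ ∃ c₁ c₂ c₃ : A × Measure B → ℝ≥0∞,
      Measurable c₁ ∧ Measurable c₂ ∧ Measurable c₃ ∧
      (∀ᵐ z ∂σ, Wp p edist (η' z) z.2.2 ≤ c₁ z.2 + c₂ z.2 + c₃ z.2) ∧
      ∫⁻ y, c₁ y ^ p ∂ν ≤ ∫⁻ u, Wp p edist u.1.2 u.2.2 ^ p ∂α + ε ∧
      ∫⁻ y, c₂ y ^ p ∂ν ≤ ∫⁻ u, Wp p edist (η u) u.2.2 ^ p ∂γ + ε ∧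
      ∫⁻ y, c₃ y ^ p ∂ν ≤ ∫⁻ u, Wp p edist u.1.2 u.2.2 ^ p ∂β + ε ∧
      (∫⁻ z, edist z.1.1 z.2.1 ^ p ∂σ) ^ (1 / p) ≤
        (∫⁻ z, edist z.1.1 z.2.1 ^ p ∂α) ^ (1 / p) + (∫⁻ z, edist z.1.1 z.2.1 ^ p ∂γ) ^ (1 / p) +
        (∫⁻ z, edist z.1.1 z.2.1 ^ p ∂β) ^ (1 / p) := by
  have p0 : 0 < p := by linarith
  obtain ⟨b₀⟩ := ‹Nonempty B›
  have : Nonempty B := ⟨b₀⟩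
  have pα := cpl_isProb hα
  have pγ := cpl_isProb hγ
  have pβ := cpl_isProb hβ
  obtain ⟨⟨g, hg, hηg⟩, hηp, hηS⟩ := hη
  obtain ⟨Γ, L, hΓ, hL, Γγ, Γα, Γβ, hΓL⟩ := exists_glue (hμ.mono fun z h => h.1)
    (hν.mono fun z h => h.1) hα hγ hβ
  have α1 : ∀ᵐ u ∂α, MemPp p edist u.1.2 := by
    rw [← hα.1] at hμ; exact ae_of_ae_map measurable_fst.aemeasurable hμ
  have α2 : ∀ᵐ u ∂α, MemPp p edist u.2.2 := by
    rw [← hα.2] at hμ'; exact ae_of_ae_map measurable_snd.aemeasurable hμ'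
  have γ1 : ∀ᵐ u ∂γ, MemPp p edist u.1.2 := by
    rw [← hγ.1] at hμ'; exact ae_of_ae_map measurable_fst.aemeasurable hμ'
  have γ2 : ∀ᵐ u ∂γ, MemPp p edist u.2.2 := by
    rw [← hγ.2] at hν'; exact ae_of_ae_map measurable_snd.aemeasurable hν'
  have β1 : ∀ᵐ u ∂β, MemPp p edist u.1.2 := by
    rw [← hβ.1] at hν; exact ae_of_ae_map measurable_fst.aemeasurable hν
  have β2 : ∀ᵐ u ∂β, MemPp p edist u.2.2 := by
    rw [← hβ.2] at hν'; exact ae_of_ae_map measurable_snd.aemeasurable hν'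
  let cl : Kernel (A × Measure B) B := clean A b₀
  let gK : Kernel (A × Measure B) B := ⟨g, hg⟩
  have hgK : ∀ z, gK z = g z := fun z => rfl
  have pgK : IsMarkovKernel gK := ⟨fun y => by
    have := hηp (y, y); rw [hηg] at this; exact this⟩
  have pcl : IsMarkovKernel cl := instMarkovClean b₀
  have hcl : ∀ z : A × Measure B, MemPp p edist z.2 → cl z = z.2 := fun z hz => clean_eq b₀ hz.1
  obtain ⟨K₁, pK₁, hK₁⟩ := exists_selector hp
    (cl.comap Prod.fst (measurable_fst (α := A × Measure B) (β := A × Measure B)))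
    (cl.comap Prod.snd measurable_snd) hε
  obtain ⟨K₂, pK₂, hK₂⟩ := exists_selector hp gK cl hε
  obtain ⟨K₃, pK₃, hK₃⟩ := exists_selector hp
    (cl.comap Prod.snd (measurable_snd (α := A × Measure B) (β := A × Measure B)))
    (cl.comap Prod.fst measurable_fst) hε
  simp only [Kernel.comap_apply] at hK₁ hK₃
  have m1 : Measurable fun ω : ((A × Measure B) × (A × Measure B)) ×
      ((A × Measure B) × (A × Measure B)) => (ω.2.1, ω.1.1) := by fun_prop
  have m2 : Measurable fun ω : ((A × Measure B) × (A × Measure B)) ×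
      ((A × Measure B) × (A × Measure B)) => ω.1.2 := by fun_prop
  have m3 : Measurable fun ω : ((A × Measure B) × (A × Measure B)) ×
      ((A × Measure B) × (A × Measure B)) => (ω.2.2, ω.1.2) := by fun_prop
  have mY : Measurable fun ω : ((A × Measure B) × (A × Measure B)) ×
      ((A × Measure B) × (A × Measure B)) => ω.2.2 := by fun_prop
  have ΓY : Γ.map (fun ω => ω.2.2) = ν := by
    rw [← hβ.1, ← Γβ, Measure.map_map measurable_fst m3]; rfl
  have ΓX : Γ.map (fun ω => ω.2.1) = μ := by
    rw [← hα.1, ← Γα, Measure.map_map measurable_fst m1]; rfl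
  have ΓY' : Γ.map (fun ω => ω.1.2) = ν' := by
    rw [← hβ.2, ← Γβ, Measure.map_map measurable_snd m3]; rfl
  obtain ⟨κ₁, pκ₁, hκ₁⟩ := exists_isCB Γ mY (K₁.comap _ m1)
  obtain ⟨κ₂, pκ₂, hκ₂⟩ := exists_isCB Γ mY (K₂.comap _ m2)
  obtain ⟨κ₃, pκ₃, hκ₃⟩ := exists_isCB Γ mY (K₃.comap _ m3)
  have M1 : Measurable (Prod.fst : B × B → B) := measurable_fst
  have M2 : Measurable (Prod.snd : B × B → B) := measurable_snd
  have i1 : IsCB Γ (fun ω => ω.2.2) (fun ω => cl ω.2.1) (κ₁.map Prod.fst) :=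
    (hκ₁.map M1).congr (ae_of_all _ fun ω => (hK₁ (ω.2.1, ω.1.1)).1.1)
  have i2 : IsCB Γ (fun ω => ω.2.2) (fun ω => cl ω.1.1) (κ₁.map Prod.snd) :=
    (hκ₁.map M2).congr (ae_of_all _ fun ω => (hK₁ (ω.2.1, ω.1.1)).1.2)
  have i3 : IsCB Γ (fun ω => ω.2.2) (fun ω => gK ω.1.2) (κ₂.map Prod.fst) :=
    (hκ₂.map M1).congr (ae_of_all _ fun ω => (hK₂ ω.1.2).1.1)
  have i4 : IsCB Γ (fun ω => ω.2.2) (fun ω => cl ω.1.2) (κ₂.map Prod.snd) :=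
    (hκ₂.map M2).congr (ae_of_all _ fun ω => (hK₂ ω.1.2).1.2)
  have i5 : IsCB Γ (fun ω => ω.2.2) (fun ω => cl ω.1.2) (κ₃.map Prod.fst) :=
    (hκ₃.map M1).congr (ae_of_all _ fun ω => (hK₃ (ω.2.2, ω.1.2)).1.1)
  have i6 : IsCB Γ (fun ω => ω.2.2) (fun ω => cl ω.2.2) (κ₃.map Prod.snd) :=
    (hκ₃.map M2).congr (ae_of_all _ fun ω => (hK₃ (ω.2.2, ω.1.2)).1.2)
  let clX : Kernel ((A × Measure B) × (A × Measure B)) B := cl.comap Prod.fst measurable_fst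
  have hgcb : IsCB γ Prod.snd clX gK := by
    refine isCB_of_sets γ measurable_snd _ gK fun S hS E hE => ?_
    have h1 := hηS S hS E hE
    simp_rw [hηg] at h1
    refine h1.trans (lintegral_congr_ae (ae_restrict_of_ae ?_))
    filter_upwards [γ1] with z hz
    change z.1.2 E = cl z.1 E
    rw [hcl _ hz]
  have i3' : IsCB Γ (fun ω => ω.2.2) (fun ω => cl ω.1.1) (κ₂.map Prod.fst) :=
    isCB_transfer L hΓL clX gK hgcb i3
  have q1 : IsMarkovKernel (κ₁.map Prod.fst) := Kernel.IsMarkovKernel.map _ M1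
  have q2 : IsMarkovKernel (κ₁.map Prod.snd) := Kernel.IsMarkovKernel.map _ M2
  have q3 : IsMarkovKernel (κ₂.map Prod.fst) := Kernel.IsMarkovKernel.map _ M1
  have q4 : IsMarkovKernel (κ₂.map Prod.snd) := Kernel.IsMarkovKernel.map _ M2
  have q5 : IsMarkovKernel (κ₃.map Prod.fst) := Kernel.IsMarkovKernel.map _ M1
  have q6 : IsMarkovKernel (κ₃.map Prod.snd) := Kernel.IsMarkovKernel.map _ M2
  have E1 := i2.unique i3'
  have E2 := i4.unique i5
  have E3 := i6.unique (isCB_comp Γ mY cl)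
  rw [ΓY] at E1 E2 E3
  have mcost : ∀ κ : Kernel (A × Measure B) (B × B), Measurable fun y =>
      (∫⁻ z, edist z.1 z.2 ^ p ∂(κ y)) ^ (1 / p) := fun κ =>
    (Measurable.lintegral_kernel (κ := κ) (f := fun z : B × B => edist z.1 z.2 ^ p)
      (by fun_prop)).pow_const _
  have icost : ∀ (k : ((A × Measure B) × (A × Measure B)) ×
      ((A × Measure B) × (A × Measure B)) → Measure (B × B)) (κ : Kernel (A × Measure B) (B × B)),
      IsCB Γ (fun ω => ω.2.2) k κ →
      ∫⁻ y, ((∫⁻ z, edist z.1 z.2 ^ p ∂(κ y)) ^ (1 / p)) ^ p ∂ν =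
        ∫⁻ ω, ∫⁻ z, edist z.1 z.2 ^ p ∂(k ω) ∂Γ := by
    intro k κ h
    simp_rw [rpow_inv_rpow' hp]
    rw [← ΓY]
    exact h (fun w => edist w.2.1 w.2.2 ^ p) (by fun_prop)
  have mK : ∀ {S : Type _} [MeasurableSpace S] (K : Kernel S (B × B)),
      Measurable fun s => ∫⁻ z, edist z.1 z.2 ^ p ∂(K s) := fun K =>
    Measurable.lintegral_kernel (κ := K) (f := fun z : B × B => edist z.1 z.2 ^ p) (by fun_prop)
  refine ⟨Γ.map (fun ω => ω.2), ⟨?_, ?_⟩, fun z => (κ₁.map Prod.fst) z.2, ⟨?_, ?_, ?_⟩,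
    _, _, _, mcost κ₁, mcost κ₂, mcost κ₃, ?_, ?_, ?_, ?_, ?_⟩
  · rw [Measure.map_map measurable_fst measurable_snd]; exact ΓX
  · rw [Measure.map_map measurable_snd measurable_snd]; exact ΓY
  · exact ⟨_, (κ₁.map Prod.fst).measurable, fun z => rfl⟩
  · intro z; infer_instance
  · intro S hS E hE
    have hset : MeasurableSet {z : (A × Measure B) × (A × Measure B) | z.2 ∈ S} :=
      measurable_snd hS
    have hm : ∀ f : (A × Measure B) × (A × Measure B) → ℝ≥0∞, Measurable f →
        ∫⁻ z in {z | z.2 ∈ S}, f z ∂(Γ.map (fun ω => ω.2)) =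
          ∫⁻ ω in {ω | ω.2.2 ∈ S}, f ω.2 ∂Γ := fun f hf =>
      setLIntegral_map hset hf measurable_snd
    refine (hm _ (((κ₁.map Prod.fst).measurable_coe hE).comp measurable_snd)).trans (Eq.trans ?_
      (hm _ ((Measure.measurable_coe hE).comp (measurable_snd.comp measurable_fst))).symm)
    simp only [Function.comp_apply]
    refine (i1.sets mY hS hE).trans (lintegral_congr_ae (ae_restrict_of_ae ?_))
    have h1 : ∀ᵐ ω ∂Γ, MemPp p edist ω.2.1.2 := by
      rw [← ΓX] at hμ
      exact ae_of_ae_map (f := fun ω : ((A × Measure B) × (A × Measure B)) ×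
        ((A × Measure B) × (A × Measure B)) => ω.2.1) (by fun_prop) hμ
    filter_upwards [h1] with ω hω
    rw [hcl _ hω]
  · have h1 : ∀ᵐ y ∂ν, Wp p edist ((κ₁.map Prod.fst) y) y.2 ≤
        (∫⁻ z, edist z.1 z.2 ^ p ∂(κ₁ y)) ^ (1 / p) + (∫⁻ z, edist z.1 z.2 ^ p ∂(κ₂ y)) ^ (1 / p) +
        (∫⁻ z, edist z.1 z.2 ^ p ∂(κ₃ y)) ^ (1 / p) := by
      filter_upwards [E1, E2, E3, hν] with y e1 e2 e3 hy
      rw [hcl y hy] at e3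
      refine Wp_le_of_three hp (b := (κ₁.map Prod.snd) y) (c := (κ₂.map Prod.snd) y)
        ⟨?_, ?_⟩ ⟨?_, ?_⟩ ⟨?_, ?_⟩
      · rw [Kernel.map_apply _ M1]
      · rw [Kernel.map_apply _ M2]
      · rw [e1, Kernel.map_apply _ M1]
      · rw [Kernel.map_apply _ M2]
      · rw [e2, Kernel.map_apply _ M1]
      · rw [← e3, Kernel.map_apply _ M2]
    have h2 : (Γ.map (fun ω => ω.2)).map Prod.snd = ν := by
      rw [Measure.map_map measurable_snd measurable_snd]; exact ΓY
    rw [← h2] at h1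
    exact ae_of_ae_map measurable_snd.aemeasurable h1
  · rw [icost _ κ₁ hκ₁]
    have h1 : ∫⁻ ω, ∫⁻ z, edist z.1 z.2 ^ p ∂(K₁.comap _ m1 ω) ∂Γ =
        ∫⁻ u, ∫⁻ z, edist z.1 z.2 ^ p ∂(K₁ u) ∂α := by
      rw [← Γα, lintegral_map (mK K₁) m1]; rfl
    rw [h1]
    refine cost_le α ?_
    filter_upwards [α1, α2] with u h1 h2
    have := (hK₁ u).2
    rw [hcl _ h1, hcl _ h2] at this
    exact this h2
  · rw [icost _ κ₂ hκ₂]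
    let K₂X : Kernel ((A × Measure B) × (A × Measure B)) (B × B) := K₂.comap Prod.snd measurable_snd
    have h1 : ∫⁻ ω, ∫⁻ z, edist z.1 z.2 ^ p ∂(K₂.comap _ m2 ω) ∂Γ =
        ∫⁻ u, ∫⁻ z, edist z.1 z.2 ^ p ∂(K₂X u) ∂γ := by
      rw [← Γγ, lintegral_map (mK K₂X) measurable_fst]; rfl
    rw [h1]
    refine cost_le γ ?_
    filter_upwards [γ2] with u h2
    have := (hK₂ u.2).2
    rw [hcl _ h2] at this
    rw [hηg]
    exact this h2
  · rw [icost _ κ₃ hκ₃]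
    have h1 : ∫⁻ ω, ∫⁻ z, edist z.1 z.2 ^ p ∂(K₃.comap _ m3 ω) ∂Γ =
        ∫⁻ u, ∫⁻ z, edist z.1 z.2 ^ p ∂(K₃ u) ∂β := by
      rw [← Γβ, lintegral_map (mK K₃) m3]; rfl
    rw [h1]
    refine cost_le β ?_
    filter_upwards [β1, β2] with u h1 h2
    have := (hK₃ u).2
    rw [hcl _ h1, hcl _ h2] at this
    rw [Wp_comm p edist_comm]
    exact this h1
  · have md : Measurable fun z : (A × Measure B) × (A × Measure B) => edist z.1.1 z.2.1 ^ p := by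
      fun_prop
    rw [← Γα, ← Γβ, ← Γγ, lintegral_map md measurable_snd, lintegral_map md m1,
      lintegral_map md m3, lintegral_map md measurable_fst]
    refine le_trans ?_ (lintegral_mink_three Γ hp (by fun_prop) (by fun_prop) (by fun_prop))
    gcongr with ω
    refine (edist_triangle4 _ ω.1.1.1 ω.1.2.1 _).trans ?_
    rw [edist_comm ω.1.2.1]
end


section
variable {A B : Type*} [MetricSpace A] [CompleteSpace A] [SecondCountableTopology A]
  [MeasurableSpace A] [BorelSpace A] [Nonempty A]
  [MetricSpace B] [CompleteSpace B] [SecondCountableTopology B]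
  [MeasurableSpace B] [BorelSpace B] [Nonempty B]

lemma core_eps {p : ℝ} (hp : 1 ≤ p) {μ ν μ' ν' : Measure (A × Measure B)}
    [IsProbabilityMeasure μ] [IsProbabilityMeasure ν] [IsProbabilityMeasure μ']
    [IsProbabilityMeasure ν']
    (hμ : ∀ᵐ z ∂μ, MemPp p edist z.2) (hν : ∀ᵐ z ∂ν, MemPp p edist z.2)
    (hμ' : ∀ᵐ z ∂μ', MemPp p edist z.2) (hν' : ∀ᵐ z ∂ν', MemPp p edist z.2)
    {α γ β : Measure ((A × Measure B) × (A × Measure B))}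
    (hα : α ∈ Cpl μ μ') (hγ : γ ∈ Cpl μ' ν') (hβ : β ∈ Cpl ν ν')
    {η : (A × Measure B) × (A × Measure B) → Measure B} (hη : IsCondBar γ η)
    {ε : ℝ≥0∞} (hε : ε ≠ 0) :
    CWbar p edist edist μ ν ≤
      (∫⁻ z, liftDist p edist edist z.1 z.2 ^ p ∂α + ε) ^ (1 / p) +
      (∫⁻ z, (edist z.1.1 z.2.1 ^ p + Wp p edist (η z) z.2.2 ^ p) ∂γ + ε) ^ (1 / p) +
      (∫⁻ z, liftDist p edist edist z.1 z.2 ^ p ∂β + ε) ^ (1 / p) := by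
  have p0 : 0 ≤ p := by linarith
  have q0 : 0 ≤ 1 / p := by positivity
  obtain ⟨σ, hσ, η', hη', c₁, c₂, c₃, m₁, m₂, m₃, hc, h₁, h₂, h₃, hd⟩ :=
    core_coupling hp hμ hν hμ' hν' hα hγ hβ hη hε
  have md : Measurable fun z : (A × Measure B) × (A × Measure B) => edist z.1.1 z.2.1 ^ p := by
    fun_prop
  have hCW : CWbar p edist edist μ ν ≤
      (∫⁻ z, (edist z.1.1 z.2.1 ^ p + Wp p edist (η' z) z.2.2 ^ p) ∂σ) ^ (1 / p) :=
    (iInf₂_le σ hσ).trans (iInf₂_le η' hη')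
  refine hCW.trans ?_
  have hI : ∫⁻ z, (c₁ z.2 + c₂ z.2 + c₃ z.2) ^ p ∂σ = ∫⁻ y, (c₁ y + c₂ y + c₃ y) ^ p ∂ν := by
    rw [← hσ.2, lintegral_map (by fun_prop) measurable_snd]
  have hJ : ∫⁻ z, (edist z.1.1 z.2.1 ^ p + Wp p edist (η' z) z.2.2 ^ p) ∂σ ≤
      ∫⁻ z, edist z.1.1 z.2.1 ^ p ∂σ + ∫⁻ y, (c₁ y + c₂ y + c₃ y) ^ p ∂ν := by
    rw [← hI, ← lintegral_add_left md]
    refine lintegral_mono_ae ?_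
    filter_upwards [hc] with z hz
    gcongr
  have hK : ∫⁻ y, (c₁ y + c₂ y + c₃ y) ^ p ∂ν ≤ ((∫⁻ s, c₁ s ^ p ∂ν) ^ (1 / p) +
      (∫⁻ s, c₂ s ^ p ∂ν) ^ (1 / p) + (∫⁻ s, c₃ s ^ p ∂ν) ^ (1 / p)) ^ p := by
    rw [← rpow_inv_rpow' hp (∫⁻ y, (c₁ y + c₂ y + c₃ y) ^ p ∂ν)]
    exact ENNReal.rpow_le_rpow (lintegral_mink_three ν hp m₁ m₂ m₃) p0
  have hL := ENNReal.rpow_le_rpow hd p0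
  rw [rpow_inv_rpow' hp] at hL
  refine (ENNReal.rpow_le_rpow (hJ.trans (add_le_add hL hK)) q0).trans ?_
  refine (mink_three hp _ _ _ _ _ _).trans ?_
  simp only [rpow_inv_rpow' hp]
  have e : ∀ m : Measure ((A × Measure B) × (A × Measure B)),
      ∫⁻ z, liftDist p edist edist z.1 z.2 ^ p ∂m =
      ∫⁻ z, edist z.1.1 z.2.1 ^ p ∂m + ∫⁻ z, Wp p edist z.1.2 z.2.2 ^ p ∂m := by
    intro m
    rw [← lintegral_add_left md]
    refine lintegral_congr fun z => ?_
    exact rpow_inv_rpow' hp _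
  rw [e, e, lintegral_add_left md, add_assoc (lintegral α _), add_assoc (lintegral γ _), add_assoc (lintegral β _)]
  gcongr

lemma core {p : ℝ} (hp : 1 ≤ p) {μ ν μ' ν' : Measure (A × Measure B)}
    [IsProbabilityMeasure μ] [IsProbabilityMeasure ν] [IsProbabilityMeasure μ']
    [IsProbabilityMeasure ν']
    (hμ : ∀ᵐ z ∂μ, MemPp p edist z.2) (hν : ∀ᵐ z ∂ν, MemPp p edist z.2)
    (hμ' : ∀ᵐ z ∂μ', MemPp p edist z.2) (hν' : ∀ᵐ z ∂ν', MemPp p edist z.2)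
    {α γ β : Measure ((A × Measure B) × (A × Measure B))}
    (hα : α ∈ Cpl μ μ') (hγ : γ ∈ Cpl μ' ν') (hβ : β ∈ Cpl ν ν')
    {η : (A × Measure B) × (A × Measure B) → Measure B} (hη : IsCondBar γ η) :
    CWbar p edist edist μ ν ≤
      (∫⁻ z, liftDist p edist edist z.1 z.2 ^ p ∂α) ^ (1 / p) +
      (∫⁻ z, (edist z.1.1 z.2.1 ^ p + Wp p edist (η z) z.2.2 ^ p) ∂γ) ^ (1 / p) +
      (∫⁻ z, liftDist p edist edist z.1 z.2 ^ p ∂β) ^ (1 / p) := by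
  have hu : Tendsto (fun n : ℕ => ((n : ℝ≥0∞))⁻¹) atTop (𝓝 0) :=
    ENNReal.tendsto_inv_nat_nhds_zero
  have key : ∀ a : ℝ≥0∞, Tendsto (fun n : ℕ => (a + ((n : ℝ≥0∞))⁻¹) ^ (1 / p)) atTop
      (𝓝 (a ^ (1 / p))) := by
    intro a
    have h1 : Tendsto (fun n : ℕ => a + ((n : ℝ≥0∞))⁻¹) atTop (𝓝 (a + 0)) :=
      tendsto_const_nhds.add hu
    rw [add_zero] at h1
    exact (ENNReal.continuous_rpow_const.tendsto a).comp h1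
  refine ge_of_tendsto' (((key _).add (key _)).add (key _)) fun n => ?_
  exact core_eps hp hμ hν hμ' hν' hα hγ hβ hη (by simp)

lemma CWbar_le {p : ℝ} (hp : 1 ≤ p) {μ ν μ' ν' : Measure (A × Measure B)}
    (hμ : MemPpLift p (edist : A → A → ℝ≥0∞) (edist : B → B → ℝ≥0∞) μ)
    (hν : MemPpLift p (edist : A → A → ℝ≥0∞) (edist : B → B → ℝ≥0∞) ν)
    (hμ' : MemPpLift p (edist : A → A → ℝ≥0∞) (edist : B → B → ℝ≥0∞) μ')
    (hν' : MemPpLift p (edist : A → A → ℝ≥0∞) (edist : B → B → ℝ≥0∞) ν') :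
    CWbar p (edist : A → A → ℝ≥0∞) (edist : B → B → ℝ≥0∞) μ ν ≤
      CWbar p edist edist μ' ν' + (AWbar p edist edist μ μ' + AWbar p edist edist ν ν') := by
  have i1 := hμ.1
  have i2 := hν.1
  have i3 := hμ'.1
  have i4 := hν'.1
  have e : CWbar p (edist : A → A → ℝ≥0∞) (edist : B → B → ℝ≥0∞) μ' ν' +
      (AWbar p edist edist μ μ' + AWbar p edist edist ν ν') =
      AWbar p edist edist μ μ' + CWbar p edist edist μ' ν' + AWbar p edist edist ν ν' := by ring
  rw [e]
  refine ENNReal.le_of_forall_pos_le_add fun δ hδ hfin => ?_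
  have hfA : AWbar p (edist : A → A → ℝ≥0∞) (edist : B → B → ℝ≥0∞) μ μ' ≠ ∞ := by
    rintro h; simp [h] at hfin
  have hfC : CWbar p (edist : A → A → ℝ≥0∞) (edist : B → B → ℝ≥0∞) μ' ν' ≠ ∞ := by
    rintro h; simp [h] at hfin
  have hfB : AWbar p (edist : A → A → ℝ≥0∞) (edist : B → B → ℝ≥0∞) ν ν' ≠ ∞ := by
    rintro h; simp [h] at hfin
  have hδ3 : (δ / 3 : ℝ≥0∞) ≠ 0 := by simp [hδ.ne']
  obtain ⟨α, hα, hα'⟩ : ∃ α ∈ Cpl μ μ', (∫⁻ z, liftDist p edist edist z.1 z.2 ^ p ∂α) ^ (1 / p) <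
      AWbar p edist edist μ μ' + δ / 3 := by
    have := ENNReal.lt_add_right hfA hδ3
    conv_lhs at this => unfold AWbar Wp
    simpa [iInf_lt_iff] using this
  obtain ⟨β, hβ, hβ'⟩ : ∃ β ∈ Cpl ν ν', (∫⁻ z, liftDist p edist edist z.1 z.2 ^ p ∂β) ^ (1 / p) <
      AWbar p edist edist ν ν' + δ / 3 := by
    have := ENNReal.lt_add_right hfB hδ3
    conv_lhs at this => unfold AWbar Wp
    simpa [iInf_lt_iff] using this
  obtain ⟨γ, hγ, η, hη, hγ'⟩ : ∃ γ ∈ Cpl μ' ν', ∃ η, IsCondBar γ η ∧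
      (∫⁻ z, (edist z.1.1 z.2.1 ^ p + Wp p edist (η z) z.2.2 ^ p) ∂γ) ^ (1 / p) <
      CWbar p edist edist μ' ν' + δ / 3 := by
    have := ENNReal.lt_add_right hfC hδ3
    conv_lhs at this => unfold CWbar
    simpa [iInf_lt_iff] using this
  refine (core hp hμ.2.1 hν.2.1 hμ'.2.1 hν'.2.1 hα hγ hβ hη).trans ?_
  refine (add_le_add (add_le_add hα'.le hγ'.le) hβ'.le).trans (le_of_eq ?_)
  have : (δ : ℝ≥0∞) = δ / 3 + δ / 3 + δ / 3 := (ENNReal.add_thirds _).symm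
  conv_rhs => rw [this]
  ring
end


/-- **Lemma 4.7 (uniform continuity).**
`|CW̄_p(μ, ν) − CW̄_p(μ', ν')| ≤ AW̄_p(μ, μ') + AW̄_p(ν, ν')`, stated as the
corresponding pair of one-sided inequalities. -/
theorem CWbar_uniformly_continuous
    {X1 X2 : Type} [MetricSpace X1] [CompleteSpace X1] [SecondCountableTopology X1]
    [MeasurableSpace X1] [BorelSpace X1] [Nonempty X1]
    [MetricSpace X2] [CompleteSpace X2] [SecondCountableTopology X2]
    [MeasurableSpace X2] [BorelSpace X2] [Nonempty X2]
    (p : ℝ) (hp : 1 ≤ p)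
    (μ ν μ' ν' : Measure (X1 × Measure X2))
    (hμ : MemPpLift p (edist : X1 → X1 → ℝ≥0∞) (edist : X2 → X2 → ℝ≥0∞) μ)
    (hν : MemPpLift p (edist : X1 → X1 → ℝ≥0∞) (edist : X2 → X2 → ℝ≥0∞) ν)
    (hμ' : MemPpLift p (edist : X1 → X1 → ℝ≥0∞) (edist : X2 → X2 → ℝ≥0∞) μ')
    (hν' : MemPpLift p (edist : X1 → X1 → ℝ≥0∞) (edist : X2 → X2 → ℝ≥0∞) ν') :
    CWbar p (edist : X1 → X1 → ℝ≥0∞) (edist : X2 → X2 → ℝ≥0∞) μ ν ≤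
        CWbar p edist edist μ' ν' + (AWbar p edist edist μ μ' + AWbar p edist edist ν ν') ∧
    CWbar p (edist : X1 → X1 → ℝ≥0∞) (edist : X2 → X2 → ℝ≥0∞) μ' ν' ≤
        CWbar p edist edist μ ν + (AWbar p edist edist μ μ' + AWbar p edist edist ν ν') := by
  refine ⟨CWbar_le hp hμ hν hμ' hν', ?_⟩
  rw [AWbar_comm p μ μ', AWbar_comm p ν ν']
  exact CWbar_le hp hμ' hν' hμ hν

end AWPaper
end
end

section
/- Let μ, ν ∈ 𝒫_p(𝒳_1 × 𝒫_p(𝒳_2)). If CW̄_p(μ, ν) = CW̄_p(ν, μ) = 0 then μ = ν. -/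
open MeasureTheory ProbabilityTheory ENNReal Filter Topology

noncomputable section

namespace AWPaper

/-! ### Generic constructions -/

variable {α β : Type*}

/-! ### Path spaces -/

variable {X : Type*} [MeasurableSpace X]

lemma aux_pow (p : ℝ) (hp : 1 ≤ p) (δ : NNReal) (hδ : 0 < δ) (u : ℝ≥0∞) :
    u ≤ δ + (δ : ℝ≥0∞) ^ (1 - p) * u ^ p := by
  have hδ' : (δ : ℝ≥0∞) ≠ 0 := by exact_mod_cast hδ.ne'
  rcases le_total u δ with h | h
  · exact h.trans le_self_add
  · rcases eq_or_ne u ∞ with rfl | hu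
    · rw [ENNReal.top_rpow_of_pos (by linarith), ENNReal.mul_top]
      · simp
      · simp [ENNReal.rpow_eq_zero_iff, hδ']
    · have hu0 : u ≠ 0 := fun h0 => hδ' (le_antisymm (h0 ▸ h) bot_le)
      calc u = u ^ (1 - p) * u ^ p := by
            rw [← ENNReal.rpow_add _ _ hu0 hu]; simp
        _ ≤ (δ : ℝ≥0∞) ^ (1 - p) * u ^ p := by
            gcongr ?_ * _
            have e : 1 - p = -(p - 1) := by ring
            rw [e, ENNReal.rpow_neg, ENNReal.rpow_neg]
            exact ENNReal.inv_le_inv.2 (ENNReal.rpow_le_rpow h (by linarith))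
        _ ≤ _ := le_add_self

lemma wass_bound {X : Type*} [MetricSpace X] [SecondCountableTopology X]
    [MeasurableSpace X] [BorelSpace X] (p : ℝ) (hp : 1 ≤ p) (F : X → ℝ) (L : NNReal)
    (hL : LipschitzWith L F) (C : ℝ) (hC : ∀ x, |F x| ≤ C) (m n : Measure X)
    [IsProbabilityMeasure m] [IsProbabilityMeasure n] (δ : NNReal) (hδ : 0 < δ) :
    ENNReal.ofReal |∫ x, F x ∂m - ∫ x, F x ∂n| ≤
      L * (δ + (δ : ℝ≥0∞) ^ (1 - p) * Wp p edist m n ^ p) := by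
  have hδ' : (δ : ℝ≥0∞) ≠ 0 := by exact_mod_cast hδ.ne'
  have hFm : Measurable F := hL.continuous.measurable
  have hc : (δ : ℝ≥0∞) ^ (1 - p) ≠ ∞ := by
    simp [ENNReal.rpow_eq_top_iff, hδ']
  let φ : ℝ≥0∞ → ℝ≥0∞ := fun a => L * (δ + (δ : ℝ≥0∞) ^ (1 - p) * a ^ p)
  have hφm : Monotone φ := by
    intro a b hab
    have : 0 ≤ p := by linarith
    simp only [φ]
    gcongr
  have hφc : Continuous φ := by
    have h3 : Continuous fun a : ℝ≥0∞ => (δ : ℝ≥0∞) + (δ : ℝ≥0∞) ^ (1 - p) * a ^ p :=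
      continuous_const.add
        ((ENNReal.continuous_const_mul hc).comp ENNReal.continuous_rpow_const)
    exact (ENNReal.continuous_const_mul ENNReal.coe_ne_top).comp h3
  change _ ≤ φ (Wp p edist m n)
  have : Nonempty (Cpl m n) := ⟨⟨m.prod n, by simp [Cpl]⟩⟩
  rw [Wp, iInf_subtype', hφm.map_ciInf_of_continuousAt hφc.continuousAt (OrderBot.bddBelow _)]
  refine le_iInf fun π => ?_
  obtain ⟨π, h1, h2⟩ := π
  simp only [φ]
  rw [← ENNReal.rpow_mul, one_div_mul_cancel (by linarith), ENNReal.rpow_one]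
  have hπ : IsProbabilityMeasure π := by
    constructor
    have := congrArg (fun q => q Set.univ) h1
    simpa [Measure.map_apply measurable_fst MeasurableSet.univ] using this
  have hint : ∀ (f : X × X → X), Measurable f → Integrable (fun z => F (f z)) π := by
    intro f hf
    exact Integrable.of_bound (hFm.comp hf).aestronglyMeasurable C
      (Filter.Eventually.of_forall fun z => by simpa using hC _)
  have e1 : ∫ x, F x ∂m = ∫ z, F z.1 ∂π := by
    rw [← h1, integral_map measurable_fst.aemeasurable hFm.aestronglyMeasurable]
  have e2 : ∫ x, F x ∂n = ∫ z, F z.2 ∂π := by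
    rw [← h2, integral_map measurable_snd.aemeasurable hFm.aestronglyMeasurable]
  rw [e1, e2, ← integral_sub (hint _ measurable_fst) (hint _ measurable_snd),
    ← Real.enorm_eq_ofReal_abs]
  refine (enorm_integral_le_lintegral_enorm _).trans ?_
  calc ∫⁻ z, ‖F z.1 - F z.2‖ₑ ∂π
      ≤ ∫⁻ z, L * (δ + (δ : ℝ≥0∞) ^ (1 - p) * edist z.1 z.2 ^ p) ∂π := by
        refine lintegral_mono fun z => ?_
        rw [← edist_eq_enorm_sub]
        refine (hL z.1 z.2).trans ?_
        gcongr
        exact aux_pow p hp δ hδ _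
    _ = _ := by
        rw [lintegral_const_mul' _ _ ENNReal.coe_ne_top, lintegral_add_left measurable_const,
          lintegral_const_mul' _ _ hc]
        simp

section CE
variable {A B : Type*} [MeasurableSpace A] [MeasurableSpace B]

lemma condBar_lintegral (γ : Measure ((A × Measure B) × (A × Measure B)))
    (η : (A × Measure B) × (A × Measure B) → Measure B) (hη : IsCondBar γ η)
    (F : B → ℝ≥0∞) (hF : Measurable F) (h : A × Measure B → ℝ≥0∞) (hh : Measurable h) :
    ∫⁻ z, (∫⁻ x, F x ∂(η z)) * h z.2 ∂γ = ∫⁻ z, (∫⁻ x, F x ∂z.1.2) * h z.2 ∂γ := by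
  obtain ⟨⟨g, hg, hgη⟩, -, hset⟩ := hη
  have hηm : Measurable η := by
    have : η = fun z => g z.2 := funext hgη
    rw [this]; exact hg.comp measurable_snd
  have hxm : Measurable (fun z : (A × Measure B) × (A × Measure B) => z.1.2) := by fun_prop
  have hk1 : Measurable fun z => ∫⁻ x, F x ∂(η z) := (Measure.measurable_lintegral hF).comp hηm
  have hk2 : Measurable fun z : (A × Measure B) × (A × Measure B) => ∫⁻ x, F x ∂(z.1.2) :=
    (Measure.measurable_lintegral hF).comp hxm
  have key : (γ.withDensity fun z => ∫⁻ x, F x ∂(η z)).map Prod.snd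
      = (γ.withDensity fun z => ∫⁻ x, F x ∂z.1.2).map Prod.snd := by
    ext S hS
    rw [Measure.map_apply measurable_snd hS, Measure.map_apply measurable_snd hS,
      withDensity_apply _ (measurable_snd hS), withDensity_apply _ (measurable_snd hS)]
    rw [← Measure.lintegral_bind hηm.aemeasurable hF.aemeasurable,
      ← Measure.lintegral_bind hxm.aemeasurable hF.aemeasurable]
    congr 1
    ext E hE
    rw [Measure.bind_apply hE hηm.aemeasurable, Measure.bind_apply hE hxm.aemeasurable]
    exact hset S hS E hE
  have e := congrArg (fun q => ∫⁻ y, h y ∂q) key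
  rw [lintegral_map hh measurable_snd, lintegral_map hh measurable_snd] at e
  have e1 := lintegral_withDensity_eq_lintegral_mul γ hk1 (hh.comp measurable_snd)
  have e2 := lintegral_withDensity_eq_lintegral_mul γ hk2 (hh.comp measurable_snd)
  exact e1.symm.trans (e.trans e2)

lemma meas_int (F : B → ℝ) (hF : Measurable F) (h0 : ∀ x, 0 ≤ F x) :
    Measurable fun m : Measure B => ∫ x, F x ∂m := by
  have : (fun m : Measure B => ∫ x, F x ∂m)
      = fun m => (∫⁻ x, ENNReal.ofReal (F x) ∂m).toReal := by
    funext m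
    exact integral_eq_lintegral_of_nonneg_ae (Filter.Eventually.of_forall h0)
      hF.aestronglyMeasurable
  rw [this]
  exact (Measure.measurable_lintegral hF.ennreal_ofReal).ennreal_toReal

lemma condBar_integral (γ : Measure ((A × Measure B) × (A × Measure B)))
    (η : (A × Measure B) × (A × Measure B) → Measure B) (hη : IsCondBar γ η)
    (F : B → ℝ) (hF : Measurable F) (h0 : ∀ x, 0 ≤ F x) (C : ℝ) (hC : ∀ x, |F x| ≤ C)
    (hX : ∀ᵐ z ∂γ, IsProbabilityMeasure z.1.2)
    (h : A × Measure B → ℝ) (hh : Measurable h) (hh0 : ∀ y, 0 ≤ h y) :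
    ∫ z, (∫ x, F x ∂(η z)) * h z.2 ∂γ = ∫ z, (∫ x, F x ∂z.1.2) * h z.2 ∂γ := by
  have hηm : Measurable η := by
    obtain ⟨⟨g, hg, hgη⟩, -, -⟩ := hη
    have : η = fun z => g z.2 := funext hgη
    rw [this]; exact hg.comp measurable_snd
  have hxm : Measurable (fun z : (A × Measure B) × (A × Measure B) => z.1.2) := by fun_prop
  have hprob := hη.2.1
  have hfin : ∀ m : Measure B, IsProbabilityMeasure m →
      ENNReal.ofReal (∫ x, F x ∂m) = ∫⁻ x, ENNReal.ofReal (F x) ∂m := by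
    intro m hm
    refine ofReal_integral_eq_lintegral_ofReal ?_ (Filter.Eventually.of_forall h0)
    exact Integrable.of_bound hF.aestronglyMeasurable C
      (Filter.Eventually.of_forall fun z => by simpa using hC _)
  rw [integral_eq_lintegral_of_nonneg_ae, integral_eq_lintegral_of_nonneg_ae]
  · congr 1
    have := condBar_lintegral γ η hη (fun x => ENNReal.ofReal (F x)) hF.ennreal_ofReal
      (fun y => ENNReal.ofReal (h y)) hh.ennreal_ofReal
    calc _ = _ := ?_
      _ = _ := this
      _ = _ := ?_
    · refine lintegral_congr fun z => ?_
      rw [ENNReal.ofReal_mul (integral_nonneg h0), hfin _ (hprob z)]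
    · refine lintegral_congr_ae ?_
      filter_upwards [hX] with z hz
      rw [ENNReal.ofReal_mul (integral_nonneg h0), hfin _ hz]
  · exact Filter.Eventually.of_forall fun z => mul_nonneg (integral_nonneg h0) (hh0 _)
  · exact (((meas_int F hF h0).comp hxm).mul (hh.comp measurable_snd)).aestronglyMeasurable
  · exact Filter.Eventually.of_forall fun z => mul_nonneg (integral_nonneg h0) (hh0 _)
  · exact (((meas_int F hF h0).comp hηm).mul (hh.comp measurable_snd)).aestronglyMeasurable

end CE

/-- Bounded Lipschitz functions. -/
def goodSub (X : Type*) [MetricSpace X] : Submodule ℝ (X → ℝ) where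
  carrier := {F | (∃ L : NNReal, LipschitzWith L F) ∧ ∃ C : ℝ, ∀ x, |F x| ≤ C}
  zero_mem' := ⟨⟨0, LipschitzWith.const 0⟩, 0, by simp⟩
  add_mem' := by
    rintro F G ⟨⟨L, hL⟩, C, hC⟩ ⟨⟨L', hL'⟩, C', hC'⟩
    exact ⟨⟨_, hL.add hL'⟩, C + C', fun x =>
      (abs_add_le _ _).trans (add_le_add (hC x) (hC' x))⟩
  smul_mem' := by
    rintro c F ⟨⟨L, hL⟩, C, hC⟩
    refine ⟨⟨‖c‖₊ * L, ?_⟩, |c| * C, fun x => ?_⟩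
    · exact (lipschitzWith_smul c).comp hL
    · simp only [Pi.smul_apply, smul_eq_mul, abs_mul]
      exact mul_le_mul_of_nonneg_left (hC x) (abs_nonneg c)

section Main
variable {X1 X2 : Type} [MetricSpace X1] [SecondCountableTopology X1]
    [MeasurableSpace X1] [BorelSpace X1]
    [MetricSpace X2] [SecondCountableTopology X2]
    [MeasurableSpace X2] [BorelSpace X2]

lemma abs_int_le {X : Type*} [MeasurableSpace X] (F : X → ℝ) (C : ℝ)
    (hC : ∀ x, |F x| ≤ C) (m : Measure X) [IsProbabilityMeasure m] : |∫ x, F x ∂m| ≤ C := by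
  have := norm_integral_le_of_norm_le_const (μ := m) (f := F) (C := C)
    (Filter.Eventually.of_forall hC)
  simpa using this

lemma coupling_ineq (p : ℝ) (hp : 1 ≤ p)
    (γ : Measure ((X1 × Measure X2) × (X1 × Measure X2))) [IsProbabilityMeasure γ]
    (η : (X1 × Measure X2) × (X1 × Measure X2) → Measure X2) (hη : IsCondBar γ η)
    (hX : ∀ᵐ z ∂γ, IsProbabilityMeasure z.1.2) (hY : ∀ᵐ z ∂γ, IsProbabilityMeasure z.2.2)
    (G : X1 → ℝ) (F : X2 → ℝ) (L : NNReal) (hGL : LipschitzWith L G) (hFL : LipschitzWith L F)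
    (C : ℝ) (hGC : ∀ x, |G x| ≤ C) (hFC : ∀ x, |F x| ≤ C) (hF0 : ∀ x, 0 ≤ F x)
    (δ : NNReal) (hδ : 0 < δ)
    (hcost : ∫⁻ z, (edist z.1.1 z.2.1 ^ p + Wp p edist (η z) z.2.2 ^ p) ∂γ ≤ (δ : ℝ≥0∞) ^ p) :
    ∫ z, Real.exp (G z.2.1 + ∫ x, F x ∂z.2.2) ∂γ ≤
      ∫ z, Real.exp (G z.1.1 + ∫ x, F x ∂z.1.2) ∂γ + Real.exp (2 * C) * (3 * L * δ) := by
  have hδ' : (δ : ℝ≥0∞) ≠ 0 := by exact_mod_cast hδ.ne'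
  have hc : (δ : ℝ≥0∞) ^ (1 - p) ≠ ∞ := by
    simp [ENNReal.rpow_eq_top_iff, hδ']
  have hηm : Measurable η := by
    obtain ⟨⟨g, hg, hgη⟩, -, -⟩ := hη
    have : η = fun z => g z.2 := funext hgη
    rw [this]; exact hg.comp measurable_snd
  have hprob := hη.2.1
  have hGm : Measurable G := hGL.continuous.measurable
  have hFm : Measurable F := hFL.continuous.measurable
  have hJ : Measurable fun m : Measure X2 => ∫ x, F x ∂m := meas_int F hFm hF0
  have hJ1 : Measurable fun z : (X1 × Measure X2) × (X1 × Measure X2) => ∫ x, F x ∂z.1.2 :=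
    hJ.comp (measurable_snd.comp measurable_fst)
  have hJ2 : Measurable fun z : (X1 × Measure X2) × (X1 × Measure X2) => ∫ x, F x ∂z.2.2 :=
    hJ.comp (measurable_snd.comp measurable_snd)
  have hJη : Measurable fun z => ∫ x, F x ∂(η z) := hJ.comp hηm
  have hG1 : Measurable fun z : (X1 × Measure X2) × (X1 × Measure X2) => G z.1.1 :=
    hGm.comp (measurable_fst.comp measurable_fst)
  have hG2 : Measurable fun z : (X1 × Measure X2) × (X1 × Measure X2) => G z.2.1 :=
    hGm.comp (measurable_fst.comp measurable_snd)
  set b : (X1 × Measure X2) × (X1 × Measure X2) → ℝ := fun z => G z.2.1 + ∫ x, F x ∂z.2.2 with hb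
  set a : (X1 × Measure X2) × (X1 × Measure X2) → ℝ := fun z => G z.1.1 + ∫ x, F x ∂z.1.2 with ha
  have hbm : Measurable b := hG2.add hJ2
  have ham : Measurable a := hG1.add hJ1
  have hbC : ∀ᵐ z ∂γ, b z ≤ 2 * C := by
    filter_upwards [hY] with z hz
    have h1 := (abs_le.1 (hGC z.2.1)).2
    have h2 := (abs_le.1 (abs_int_le F C hFC z.2.2)).2
    simp only [hb]; linarith
  have haC : ∀ᵐ z ∂γ, a z ≤ 2 * C := by
    filter_upwards [hX] with z hz
    have h1 := (abs_le.1 (hGC z.1.1)).2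
    have h2 := (abs_le.1 (abs_int_le F C hFC z.1.2)).2
    simp only [ha]; linarith
  have ibE : Integrable (fun z => Real.exp (b z)) γ :=
    Integrable.of_bound hbm.exp.aestronglyMeasurable (Real.exp (2 * C)) (by
      filter_upwards [hbC] with z hz
      simpa using hz)
  have iaE : Integrable (fun z => Real.exp (a z)) γ :=
    Integrable.of_bound ham.exp.aestronglyMeasurable (Real.exp (2 * C)) (by
      filter_upwards [haC] with z hz
      simpa using hz)
  have iG1 : Integrable (fun z : (X1 × Measure X2) × (X1 × Measure X2) => G z.1.1) γ :=
    Integrable.of_bound hG1.aestronglyMeasurable C (Filter.Eventually.of_forall fun z => hGC _)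
  have iG2 : Integrable (fun z : (X1 × Measure X2) × (X1 × Measure X2) => G z.2.1) γ :=
    Integrable.of_bound hG2.aestronglyMeasurable C (Filter.Eventually.of_forall fun z => hGC _)
  have iJ1 : Integrable (fun z : (X1 × Measure X2) × (X1 × Measure X2) => ∫ x, F x ∂z.1.2) γ :=
    Integrable.of_bound hJ1.aestronglyMeasurable C (by
      filter_upwards [hX] with z hz
      exact abs_int_le F C hFC z.1.2)
  have iJ2 : Integrable (fun z : (X1 × Measure X2) × (X1 × Measure X2) => ∫ x, F x ∂z.2.2) γ :=
    Integrable.of_bound hJ2.aestronglyMeasurable C (by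
      filter_upwards [hY] with z hz
      exact abs_int_le F C hFC z.2.2)
  have iJη : Integrable (fun z => ∫ x, F x ∂(η z)) γ :=
    Integrable.of_bound hJη.aestronglyMeasurable C (Filter.Eventually.of_forall fun z => by
      have := hprob z
      exact abs_int_le F C hFC (η z))
  have imul : ∀ f : (X1 × Measure X2) × (X1 × Measure X2) → ℝ, Integrable f γ →
      Integrable (fun z => f z * Real.exp (b z)) γ := by
    intro f hf
    refine hf.mul_bdd (c := Real.exp (2 * C)) hbm.exp.aestronglyMeasurable ?_
    filter_upwards [hbC] with z hz
    simpa using hz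
  have hce : ∫ z, (∫ x, F x ∂(η z)) * Real.exp (b z) ∂γ
      = ∫ z, (∫ x, F x ∂z.1.2) * Real.exp (b z) ∂γ :=
    condBar_integral γ η hη F hFm hF0 C hFC hX (fun y => Real.exp (G y.1 + ∫ x, F x ∂y.2))
      ((hGm.comp measurable_fst).add (hJ.comp measurable_snd)).exp (fun y => (Real.exp_pos _).le)
  -- the error term
  set e : (X1 × Measure X2) × (X1 × Measure X2) → ℝ := fun z =>
    |G z.1.1 - G z.2.1| + |∫ x, F x ∂(η z) - ∫ x, F x ∂z.2.2| with he
  have ie : Integrable e γ := (iG1.sub iG2).abs.add (iJη.sub iJ2).abs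
  have he0 : ∀ z, 0 ≤ e z := fun z => by positivity
  have hebd : ∫ z, e z ∂γ ≤ 3 * L * δ := by
    rw [integral_eq_lintegral_of_nonneg_ae (Filter.Eventually.of_forall he0)
      ie.aestronglyMeasurable]
    refine ENNReal.toReal_le_of_le_ofReal (by positivity) ?_
    calc ∫⁻ z, ENNReal.ofReal (e z) ∂γ
        ≤ ∫⁻ z, L * (2 * δ + (δ : ℝ≥0∞) ^ (1 - p) *
            (edist z.1.1 z.2.1 ^ p + Wp p edist (η z) z.2.2 ^ p)) ∂γ := by
          refine lintegral_mono_ae ?_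
          filter_upwards [hY] with z hz
          have := hprob z
          have h1 := wass_bound p hp F L hFL C hFC (η z) z.2.2 δ hδ
          have h2 : ENNReal.ofReal |G z.1.1 - G z.2.1| ≤
              L * (δ + (δ : ℝ≥0∞) ^ (1 - p) * edist z.1.1 z.2.1 ^ p) := by
            rw [← Real.enorm_eq_ofReal_abs, ← edist_eq_enorm_sub]
            refine (hGL _ _).trans ?_
            gcongr
            exact aux_pow p hp δ hδ _
          simp only [he]
          rw [ENNReal.ofReal_add (abs_nonneg _) (abs_nonneg _)]
          refine (add_le_add h2 h1).trans (le_of_eq ?_)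
          ring
      _ = L * (2 * δ + (δ : ℝ≥0∞) ^ (1 - p) *
            ∫⁻ z, (edist z.1.1 z.2.1 ^ p + Wp p edist (η z) z.2.2 ^ p) ∂γ) := by
          rw [lintegral_const_mul' _ _ ENNReal.coe_ne_top, lintegral_add_left measurable_const,
            lintegral_const_mul' _ _ hc]
          simp
      _ ≤ L * (2 * δ + (δ : ℝ≥0∞) ^ (1 - p) * (δ : ℝ≥0∞) ^ p) := by gcongr
      _ = ENNReal.ofReal (3 * L * δ) := by
          rw [← ENNReal.rpow_add _ _ hδ' ENNReal.coe_ne_top, sub_add_cancel, ENNReal.rpow_one,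
            ENNReal.ofReal_mul (by positivity), ENNReal.ofReal_mul (by positivity)]
          simp only [ENNReal.ofReal_coe_nnreal, ENNReal.ofReal_ofNat]
          ring
  have hlow : ∫ z, ((G z.2.1 - G z.1.1) + (∫ x, F x ∂z.2.2 - ∫ x, F x ∂(η z))) * Real.exp (b z) ∂γ
      ≤ Real.exp (2 * C) * (3 * L * δ) := by
    calc _ ≤ ∫ z, Real.exp (2 * C) * e z ∂γ := by
          refine integral_mono_ae (imul _ ((iG2.sub iG1).add (iJ2.sub iJη))) (ie.const_mul _) ?_
          filter_upwards [hbC] with z hz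
          have h1 : (G z.2.1 - G z.1.1) + (∫ x, F x ∂z.2.2 - ∫ x, F x ∂(η z)) ≤ e z := by
            have h3 := neg_abs_le (G z.1.1 - G z.2.1)
            have h4 := neg_abs_le (∫ x, F x ∂(η z) - ∫ x, F x ∂z.2.2)
            simp only [he]; linarith
          calc _ ≤ e z * Real.exp (b z) := mul_le_mul_of_nonneg_right h1 (Real.exp_pos _).le
            _ ≤ e z * Real.exp (2 * C) :=
              mul_le_mul_of_nonneg_left (Real.exp_le_exp.2 hz) (he0 z)
            _ = _ := mul_comm _ _
      _ = Real.exp (2 * C) * ∫ z, e z ∂γ := integral_const_mul _ _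
      _ ≤ _ := mul_le_mul_of_nonneg_left hebd (Real.exp_pos _).le
  have hjensen : ∫ z, Real.exp (b z) ∂γ ≤ ∫ z, Real.exp (a z) ∂γ +
      ∫ z, (b z - a z) * Real.exp (b z) ∂γ := by
    have i3 : Integrable (fun z => (b z - a z) * Real.exp (b z)) γ :=
      imul _ ((iG2.add iJ2).sub (iG1.add iJ1))
    rw [← integral_add iaE i3]
    refine integral_mono ibE (iaE.add i3) fun z => ?_
    have h1 := Real.add_one_le_exp (a z - b z)
    have h2 : Real.exp (a z) = Real.exp (a z - b z) * Real.exp (b z) := by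
      rw [← Real.exp_add]; ring_nf
    simp only [Pi.add_apply, h2]
    nlinarith [Real.exp_pos (b z)]
  have hsplit : ∫ z, (b z - a z) * Real.exp (b z) ∂γ =
      ∫ z, ((G z.2.1 - G z.1.1) + (∫ x, F x ∂z.2.2 - ∫ x, F x ∂(η z))) * Real.exp (b z) ∂γ := by
    have i4 : Integrable (fun z : (X1 × Measure X2) × (X1 × Measure X2) =>
        ((G z.2.1 - G z.1.1) + ∫ x, F x ∂z.2.2) * Real.exp (b z)) γ :=
      imul _ ((iG2.sub iG1).add iJ2)
    have e1 : ∫ z, (b z - a z) * Real.exp (b z) ∂γ =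
        ∫ z, ((G z.2.1 - G z.1.1) + ∫ x, F x ∂z.2.2) * Real.exp (b z) ∂γ
          - ∫ z, (∫ x, F x ∂z.1.2) * Real.exp (b z) ∂γ := by
      rw [← integral_sub i4 (imul _ iJ1)]
      refine integral_congr_ae (Filter.Eventually.of_forall fun z => ?_)
      simp only [ha, hb]; ring
    rw [e1, ← hce, ← integral_sub i4 (imul _ iJη)]
    refine integral_congr_ae (Filter.Eventually.of_forall fun z => ?_)
    simp only; ring
  linarith

lemma exp_ineq_nonneg (p : ℝ) (hp : 1 ≤ p) (μ ν : Measure (X1 × Measure X2))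
    [IsProbabilityMeasure μ] (hμ : ∀ᵐ z ∂μ, IsProbabilityMeasure z.2)
    (hν : ∀ᵐ z ∂ν, IsProbabilityMeasure z.2)
    (h : CWbar p (edist : X1 → X1 → ℝ≥0∞) (edist : X2 → X2 → ℝ≥0∞) μ ν = 0)
    (G : X1 → ℝ) (hG : G ∈ goodSub X1) (F : X2 → ℝ) (hF : F ∈ goodSub X2)
    (hF0 : ∀ x, 0 ≤ F x) :
    ∫ z, Real.exp (G z.1 + ∫ x, F x ∂z.2) ∂ν ≤ ∫ z, Real.exp (G z.1 + ∫ x, F x ∂z.2) ∂μ := by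
  obtain ⟨⟨L1, hL1⟩, C1, hC1⟩ := hG
  obtain ⟨⟨L2, hL2⟩, C2, hC2⟩ := hF
  have hGm : Measurable G := hL1.continuous.measurable
  have hFm : Measurable F := hL2.continuous.measurable
  have hT : Measurable fun z : X1 × Measure X2 => Real.exp (G z.1 + ∫ x, F x ∂z.2) :=
    ((hGm.comp measurable_fst).add ((meas_int F hFm hF0).comp measurable_snd)).exp
  set L := max L1 L2
  set C := max C1 C2
  have key : ∀ δ : NNReal, 0 < δ → ∫ z, Real.exp (G z.1 + ∫ x, F x ∂z.2) ∂ν ≤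
      ∫ z, Real.exp (G z.1 + ∫ x, F x ∂z.2) ∂μ + Real.exp (2 * C) * (3 * L * δ) := by
    intro δ hδ
    have hlt : CWbar p (edist : X1 → X1 → ℝ≥0∞) (edist : X2 → X2 → ℝ≥0∞) μ ν < δ := by
      rw [h]; exact_mod_cast hδ
    simp only [CWbar, iInf_lt_iff] at hlt
    obtain ⟨γ, ⟨hγ1, hγ2⟩, η, hη, hlt⟩ := hlt
    have hγ : IsProbabilityMeasure γ := by
      constructor
      have := congrArg (fun q => q Set.univ) hγ1
      simpa [Measure.map_apply measurable_fst MeasurableSet.univ] using this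
    have hX : ∀ᵐ z ∂γ, IsProbabilityMeasure z.1.2 := by
      rw [← hγ1] at hμ
      exact ae_of_ae_map measurable_fst.aemeasurable hμ
    have hY : ∀ᵐ z ∂γ, IsProbabilityMeasure z.2.2 := by
      rw [← hγ2] at hν
      exact ae_of_ae_map measurable_snd.aemeasurable hν
    have hcost : ∫⁻ z, (edist z.1.1 z.2.1 ^ p + Wp p edist (η z) z.2.2 ^ p) ∂γ ≤
        (δ : ℝ≥0∞) ^ p := by
      have := ENNReal.rpow_le_rpow hlt.le (by linarith : 0 ≤ p)
      rwa [← ENNReal.rpow_mul, one_div_mul_cancel (by linarith), ENNReal.rpow_one] at this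
    have := coupling_ineq p hp γ η hη hX hY G F L (hL1.weaken (le_max_left _ _))
      (hL2.weaken (le_max_right _ _)) C (fun x => (hC1 x).trans (le_max_left _ _))
      (fun x => (hC2 x).trans (le_max_right _ _)) hF0 δ hδ hcost
    rw [← hγ1, ← hγ2, integral_map measurable_fst.aemeasurable hT.aestronglyMeasurable,
      integral_map measurable_snd.aemeasurable hT.aestronglyMeasurable]
    exact this
  have hlim : Tendsto (fun n : ℕ => ∫ z, Real.exp (G z.1 + ∫ x, F x ∂z.2) ∂μ +
      Real.exp (2 * C) * (3 * L * (1 / ((n : ℝ) + 1)))) atTop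
      (𝓝 (∫ z, Real.exp (G z.1 + ∫ x, F x ∂z.2) ∂μ + Real.exp (2 * C) * (3 * L * 0))) :=
    tendsto_const_nhds.add ((tendsto_one_div_add_atTop_nhds_zero_nat.const_mul _).const_mul _)
  simp only [mul_zero, add_zero] at hlim
  refine ge_of_tendsto' hlim fun n => ?_
  have := key (1 / ((n : NNReal) + 1)) (by positivity)
  simpa using this

lemma exp_ineq (p : ℝ) (hp : 1 ≤ p) (μ ν : Measure (X1 × Measure X2))
    [IsProbabilityMeasure μ] (hμ : ∀ᵐ z ∂μ, IsProbabilityMeasure z.2)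
    (hν : ∀ᵐ z ∂ν, IsProbabilityMeasure z.2)
    (h : CWbar p (edist : X1 → X1 → ℝ≥0∞) (edist : X2 → X2 → ℝ≥0∞) μ ν = 0)
    (G : X1 → ℝ) (hG : G ∈ goodSub X1) (F : X2 → ℝ) (hF : F ∈ goodSub X2) :
    ∫ z, Real.exp (G z.1 + ∫ x, F x ∂z.2) ∂ν ≤ ∫ z, Real.exp (G z.1 + ∫ x, F x ∂z.2) ∂μ := by
  obtain ⟨C, hC⟩ := hF.2
  have hconst1 : (fun _ : X1 => -C) ∈ goodSub X1 :=
    ⟨⟨0, LipschitzWith.const _⟩, |-C|, fun _ => le_rfl⟩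
  have hconst2 : (fun _ : X2 => C) ∈ goodSub X2 :=
    ⟨⟨0, LipschitzWith.const _⟩, |C|, fun _ => le_rfl⟩
  have key := exp_ineq_nonneg p hp μ ν hμ hν h _ (add_mem hG hconst1) _ (add_mem hF hconst2)
    (fun x => by have := (abs_le.1 (hC x)).1; simp only [Pi.add_apply]; linarith)
  have hFm : Measurable F := hF.1.choose_spec.continuous.measurable
  have hcongr : ∀ q : Measure (X1 × Measure X2), (∀ᵐ z ∂q, IsProbabilityMeasure z.2) →
      ∫ z, Real.exp ((G + fun _ => -C : X1 → ℝ) z.1 + ∫ x, (F + fun _ => C : X2 → ℝ) x ∂z.2) ∂q =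
      ∫ z, Real.exp (G z.1 + ∫ x, F x ∂z.2) ∂q := by
    intro q hq
    refine integral_congr_ae ?_
    filter_upwards [hq] with z hz
    have hi : Integrable F z.2 := Integrable.of_bound hFm.aestronglyMeasurable C
      (Filter.Eventually.of_forall hC)
    simp only [Pi.add_apply]
    rw [integral_add hi (integrable_const _)]
    simp
    ring
  rwa [hcongr μ hμ, hcongr ν hν] at key

lemma exp_eq_complex {Z : Type*} [MeasurableSpace Z] (μ ν : Measure Z)
    [IsProbabilityMeasure μ] [IsProbabilityMeasure ν] (T : Z → ℝ) (hT : Measurable T)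
    (C : ℝ) (hC : ∀ z, |T z| ≤ C)
    (h : ∀ t : ℝ, ∫ z, Real.exp (t * T z) ∂μ = ∫ z, Real.exp (t * T z) ∂ν) :
    ∫ z, Complex.exp (T z * Complex.I) ∂μ = ∫ z, Complex.exp (T z * Complex.I) ∂ν := by
  have hm : mgf T μ = mgf T ν := funext fun t => h t
  have huniv : integrableExpSet T μ = Set.univ := by
    refine Set.eq_univ_of_forall fun t => ?_
    refine Integrable.of_bound (hT.const_mul t).exp.aestronglyMeasurable (Real.exp (|t| * C))
      (Filter.Eventually.of_forall fun z => ?_)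
    rw [Real.norm_eq_abs, Real.abs_exp]
    refine Real.exp_le_exp.2 ((le_abs_self _).trans ?_)
    rw [abs_mul]
    exact mul_le_mul_of_nonneg_left (hC z) (abs_nonneg t)
  have := eqOn_complexMGF_of_mgf hm (x := Complex.I) (by simp [huniv])
  simp only [complexMGF] at this
  simpa only [mul_comm] using this

/-- Index set of test functions. -/
abbrev Idx (X1 X2 : Type) [MetricSpace X1] [MetricSpace X2] : Type :=
  goodSub X1 × goodSub X2

/-- Test functions. -/
def Phi (z : X1 × ProbabilityMeasure X2) (i : Idx X1 X2) : ℝ :=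
  i.1.1 z.1 + ∫ x, i.2.1 x ∂(z.2 : Measure X2)

lemma good_meas {X : Type*} [MetricSpace X] [MeasurableSpace X] [BorelSpace X]
    (F : goodSub X) : Measurable F.1 := F.2.1.choose_spec.continuous.measurable

lemma good_integrable {X : Type*} [MetricSpace X] [MeasurableSpace X] [BorelSpace X]
    (F : goodSub X) (m : Measure X) [IsProbabilityMeasure m] : Integrable F.1 m := by
  obtain ⟨C, hC⟩ := F.2.2
  exact Integrable.of_bound (good_meas F).aestronglyMeasurable C (Filter.Eventually.of_forall hC)

lemma Phi_meas : Measurable (Phi (X1 := X1) (X2 := X2)) := by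
  refine measurable_pi_iff.2 fun i => ?_
  refine ((good_meas i.1).comp measurable_fst).add ?_
  obtain ⟨C, hC⟩ := i.2.2.2
  have h1 : Measurable fun m : Measure X2 => ∫ x, (i.2.1 x + C) ∂m :=
    meas_int _ ((good_meas i.2).add_const C)
      (fun x => by have := (abs_le.1 (hC x)).1; linarith)
  have h2 : Measurable fun z : X1 × ProbabilityMeasure X2 =>
      ∫ x, (i.2.1 x + C) ∂(z.2 : Measure X2) - C :=
    (h1.comp (measurable_subtype_coe.comp measurable_snd)).sub_const C
  convert h2 using 2 with z
  rw [integral_add (good_integrable i.2 _) (integrable_const _)]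
  simp

lemma Phi_gen : (inferInstance : MeasurableSpace (X1 × ProbabilityMeasure X2)) ≤
    MeasurableSpace.comap (Phi (X1 := X1) (X2 := X2)) inferInstance := by
  have hcoord : ∀ i : Idx X1 X2,
      Measurable[MeasurableSpace.comap (Phi (X1 := X1) (X2 := X2)) inferInstance]
        (fun z : X1 × ProbabilityMeasure X2 => Phi z i) := by
    intro i s hs
    exact ⟨(fun v : Idx X1 X2 → ℝ => v i) ⁻¹' s, measurable_pi_apply i hs, rfl⟩
  refine sup_le ?_ ?_
  · refine Measurable.comap_le ?_
    refine @measurable_of_isClosed _ _ _ _ _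
      (MeasurableSpace.comap (Phi (X1 := X1) (X2 := X2)) inferInstance) _ fun K hK => ?_
    rcases K.eq_empty_or_nonempty with rfl | hne
    · simp
    have hG : (fun x => min (Metric.infDist x K) 1) ∈ goodSub X1 := by
      refine ⟨⟨1, ?_⟩, 1, fun x => ?_⟩
      · exact (Metric.lipschitz_infDist_pt K).min_const 1
      · rw [abs_of_nonneg (le_min Metric.infDist_nonneg zero_le_one)]
        exact min_le_right _ _
    have := hcoord (⟨_, hG⟩, 0) (measurableSet_singleton 0)
    convert this using 1
    ext z
    simp only [Set.mem_preimage, Phi, Set.mem_singleton_iff, Submodule.coe_zero, Pi.zero_apply,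
      integral_zero, add_zero]
    rw [hK.mem_iff_infDist_zero hne]
    constructor
    · intro h; simp [h]
    · intro h
      rcases min_choice (Metric.infDist z.1 K) 1 with h' | h'
      · rw [← h', h]
      · rw [h'] at h; norm_num at h
  · refine Measurable.comap_le ?_
    refine @Measurable.subtype_mk _ _ (MeasurableSpace.comap (Phi (X1 := X1) (X2 := X2)) inferInstance)
      _ _ _ ?_ (fun z => z.2.2)
    have hπ : ∀ z : X1 × ProbabilityMeasure X2, IsProbabilityMeasure (z.2.1) := fun z => z.2.2
    refine @Measurable.measure_of_isPiSystem_of_isProbabilityMeasure _ _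
      (MeasurableSpace.comap (Phi (X1 := X1) (X2 := X2)) inferInstance) _ _ hπ {s | IsClosed s}
      (by rw [BorelSpace.measurable_eq (α := X2), borel_eq_generateFrom_isClosed])
      isPiSystem_isClosed fun K hK => ?_
    have hpos : ∀ n : ℕ, (0 : ℝ) < 1 / ((n : ℝ) + 1) := fun n => by positivity
    refine @measurable_of_tendsto_metrizable _ _
      (MeasurableSpace.comap (Phi (X1 := X1) (X2 := X2)) inferInstance) _ _ _ _
      (fun n z => ∫⁻ x, (thickenedIndicator (hpos n) K x : ℝ≥0∞) ∂z.2.1) _ (fun n => ?_)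
      (tendsto_pi_nhds.2 fun z => ?_)
    · have hF : (fun x => (thickenedIndicator (hpos n) K x : ℝ)) ∈ goodSub X2 := by
        refine ⟨⟨_, (LipschitzWith.subtype_val _).comp (lipschitzWith_thickenedIndicator (hpos n) K)⟩,
          1, fun x => ?_⟩
        rw [abs_of_nonneg (NNReal.coe_nonneg _)]
        exact_mod_cast thickenedIndicator_le_one (hpos n) K x
      have := (hcoord (0, ⟨_, hF⟩)).ennreal_ofReal
      convert this using 2 with z
      simp only [Phi, Submodule.coe_zero, Pi.zero_apply, zero_add]
      have hz : IsProbabilityMeasure (z.2 : Measure X2) := z.2.2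
      rw [ofReal_integral_eq_lintegral_ofReal (good_integrable ⟨_, hF⟩ _)
        (Filter.Eventually.of_forall fun x => NNReal.coe_nonneg _)]
      simp
    · have := hπ z
      exact tendsto_lintegral_thickenedIndicator_of_isClosed z.2.1 hK hpos
        tendsto_one_div_add_atTop_nhds_zero_nat

lemma ext_of_exp (μ ν : Measure (X1 × ProbabilityMeasure X2)) [IsProbabilityMeasure μ]
    [IsProbabilityMeasure ν]
    (h : ∀ i : Idx X1 X2, ∫ z, Real.exp (Phi z i) ∂μ = ∫ z, Real.exp (Phi z i) ∂ν) : μ = ν := by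
  have hcoord : ∀ i : Idx X1 X2, Measurable (fun z : X1 × ProbabilityMeasure X2 => Phi z i) :=
    fun i => (measurable_pi_apply i).comp Phi_meas
  have hsmul : ∀ (t : ℝ) (i : Idx X1 X2) (z : X1 × ProbabilityMeasure X2),
      Phi z (t • i) = t * Phi z i := by
    intro t i z
    simp [Phi, integral_const_mul, mul_add]
  have hadd : ∀ (i j : Idx X1 X2) (z : X1 × ProbabilityMeasure X2),
      Phi z (i + j) = Phi z i + Phi z j := by
    intro i j z
    have := integral_add (good_integrable i.2 (z.2 : Measure X2)) (good_integrable j.2 _)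
    simp only [Phi, Prod.fst_add, Prod.snd_add, Submodule.coe_add, Pi.add_apply]
    rw [this]; ring
  have hzero : ∀ z : X1 × ProbabilityMeasure X2, Phi z 0 = 0 := by
    intro z; simp [Phi]
  have hsum : ∀ (s : Finset (Idx X1 X2)) (c : Idx X1 X2 → ℝ) (z : X1 × ProbabilityMeasure X2),
      Phi z (∑ i ∈ s, c i • i) = ∑ i ∈ s, c i * Phi z i := by
    intro s c z
    classical
    induction s using Finset.induction_on with
    | empty => simp [hzero]
    | insert a s ha ih => rw [Finset.sum_insert ha, Finset.sum_insert ha, hadd, hsmul, ih]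
  have hchar : ∀ i : Idx X1 X2, ∫ z, Complex.exp (Phi z i * Complex.I) ∂μ
      = ∫ z, Complex.exp (Phi z i * Complex.I) ∂ν := by
    intro i
    obtain ⟨C1, hC1⟩ := i.1.2.2
    obtain ⟨C2, hC2⟩ := i.2.2.2
    refine exp_eq_complex μ ν (fun z => Phi z i) (hcoord i) (C1 + C2) (fun z => ?_) (fun t => ?_)
    · have hz : IsProbabilityMeasure (z.2 : Measure X2) := z.2.2
      exact (abs_add_le _ _).trans (add_le_add (hC1 _) (abs_int_le _ _ hC2 _))
    · simpa only [hsmul] using h (t • i)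
  have hPhi := Phi_meas (X1 := X1) (X2 := X2)
  have hmap : μ.map Phi = ν.map Phi := by
    have p1 : IsProbabilityMeasure (ν.map Phi) := Measure.isProbabilityMeasure_map hPhi.aemeasurable
    have p2 : IsProbabilityMeasure (μ.map Phi) := Measure.isProbabilityMeasure_map hPhi.aemeasurable
    have hfin : ∀ I : Finset (Idx X1 X2),
        IsFiniteMeasure ((ν.map Phi).map I.restrict) := fun I => inferInstance
    refine IsProjectiveLimit.unique (P := fun I => (ν.map Phi).map I.restrict)
      (fun I => ?_) (fun I => rfl)
    refine Measure.ext_of_charFunDual (funext fun L => ?_)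
    have hr : Measurable (I.restrict (π := fun _ => ℝ)) := Finset.measurable_restrict I
    have hLm : Measurable L := L.continuous.measurable
    have hEm : Measurable fun v : I → ℝ => Complex.exp (L v * Complex.I) := by fun_prop
    classical
    let c : Idx X1 X2 → ℝ := fun i => if hi : i ∈ I then L (Pi.single ⟨i, hi⟩ 1) else 0
    have hL : ∀ z : X1 × ProbabilityMeasure X2,
        L (I.restrict (Phi z)) = Phi z (∑ i ∈ I, c i • i) := by
      intro z
      rw [hsum, ← Finset.sum_coe_sort I]
      refine (LinearMap.pi_apply_eq_sum_univ (L : (I → ℝ) →ₗ[ℝ] ℝ) (I.restrict (Phi z))).trans ?_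
      refine Finset.sum_congr rfl fun i _ => ?_
      simp only [c, i.2, dite_true, smul_eq_mul, Finset.restrict]
      rw [mul_comm]
      congr 1
      refine congrArg L ?_
      funext j
      simp [Pi.single_apply, eq_comm]
    show charFunDual ((μ.map Phi).map I.restrict) L = charFunDual ((ν.map Phi).map I.restrict) L
    rw [charFunDual_apply, charFunDual_apply, Measure.map_map hr hPhi, Measure.map_map hr hPhi,
      integral_map (hr.comp hPhi).aemeasurable hEm.aestronglyMeasurable,
      integral_map (hr.comp hPhi).aemeasurable hEm.aestronglyMeasurable]
    simp only [Function.comp, hL]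
    exact hchar _
  ext D hD
  obtain ⟨D', hD', rfl⟩ := Phi_gen D hD
  rw [← Measure.map_apply hPhi hD', ← Measure.map_apply hPhi hD', hmap]

lemma ext_of_exp' [Nonempty X2] (μ ν : Measure (X1 × Measure X2)) [IsProbabilityMeasure μ]
    [IsProbabilityMeasure ν] (hμ : ∀ᵐ z ∂μ, IsProbabilityMeasure z.2)
    (hν : ∀ᵐ z ∂ν, IsProbabilityMeasure z.2)
    (h : ∀ G ∈ goodSub X1, ∀ F ∈ goodSub X2,
      ∫ z, Real.exp (G z.1 + ∫ x, F x ∂z.2) ∂μ = ∫ z, Real.exp (G z.1 + ∫ x, F x ∂z.2) ∂ν) :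
    μ = ν := by
  classical
  let R0 : Measure X2 → Measure X2 := fun m =>
    if IsProbabilityMeasure m then m else Measure.dirac (Classical.arbitrary X2)
  have hR0 : ∀ m, IsProbabilityMeasure (R0 m) := by
    intro m
    simp only [R0]
    split_ifs with hm
    · exact hm
    · infer_instance
  have hR0m : Measurable R0 :=
    Measurable.ite ProbabilityMeasure.measurableSet_isProbabilityMeasure measurable_id measurable_const
  let R : X1 × Measure X2 → X1 × ProbabilityMeasure X2 := fun z => (z.1, ⟨R0 z.2, hR0 z.2⟩)
  have hR : Measurable R :=
    measurable_fst.prodMk ((hR0m.comp measurable_snd).subtype_mk)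
  let S : X1 × ProbabilityMeasure X2 → X1 × Measure X2 := fun z => (z.1, z.2.1)
  have hS : Measurable S := measurable_fst.prodMk (measurable_subtype_coe.comp measurable_snd)
  have hSR : ∀ z : X1 × Measure X2, IsProbabilityMeasure z.2 → S (R z) = z := by
    intro z hz
    simp [S, R, R0, hz]
  have hback : ∀ q : Measure (X1 × Measure X2), (∀ᵐ z ∂q, IsProbabilityMeasure z.2) →
      (q.map R).map S = q := by
    intro q hq
    rw [Measure.map_map hS hR]
    have : S ∘ R =ᵐ[q] id := by
      filter_upwards [hq] with z hz
      exact hSR z hz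
    rw [Measure.map_congr this, Measure.map_id]
  have p1 : IsProbabilityMeasure (μ.map R) := Measure.isProbabilityMeasure_map hR.aemeasurable
  have p2 : IsProbabilityMeasure (ν.map R) := Measure.isProbabilityMeasure_map hR.aemeasurable
  have hint : ∀ q : Measure (X1 × Measure X2), (∀ᵐ z ∂q, IsProbabilityMeasure z.2) →
      ∀ i : Idx X1 X2, ∫ z, Real.exp (Phi z i) ∂(q.map R) =
        ∫ z, Real.exp (i.1.1 z.1 + ∫ x, i.2.1 x ∂z.2) ∂q := by
    intro q hq i
    have hm : Measurable fun z : X1 × ProbabilityMeasure X2 => Real.exp (Phi z i) :=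
      ((measurable_pi_apply i).comp Phi_meas).exp
    rw [integral_map hR.aemeasurable hm.aestronglyMeasurable]
    refine integral_congr_ae ?_
    filter_upwards [hq] with z hz
    have e : (R z).2.1 = z.2 := congrArg Prod.snd (hSR z hz)
    have e' : (R z).1 = z.1 := rfl
    simp only [Phi, e', ← e]
    rfl
  have key : μ.map R = ν.map R := by
    refine ext_of_exp _ _ fun i => ?_
    rw [hint μ hμ, hint ν hν]
    exact h _ i.1.2 _ i.2.2
  rw [← hback μ hμ, ← hback ν hν, key]

end Main

/-- **Lemma 4.9 (Hausdorff property).**  If `CW̄_p(μ, ν) = CW̄_p(ν, μ) = 0` then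
`μ = ν`. -/
theorem CWbar_eq_zero_iff
    {X1 X2 : Type} [MetricSpace X1] [CompleteSpace X1] [SecondCountableTopology X1]
    [MeasurableSpace X1] [BorelSpace X1] [Nonempty X1]
    [MetricSpace X2] [CompleteSpace X2] [SecondCountableTopology X2]
    [MeasurableSpace X2] [BorelSpace X2] [Nonempty X2]
    (p : ℝ) (hp : 1 ≤ p)
    (μ ν : Measure (X1 × Measure X2))
    (hμ : MemPpLift p (edist : X1 → X1 → ℝ≥0∞) (edist : X2 → X2 → ℝ≥0∞) μ)
    (hν : MemPpLift p (edist : X1 → X1 → ℝ≥0∞) (edist : X2 → X2 → ℝ≥0∞) ν)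
    (h1 : CWbar p (edist : X1 → X1 → ℝ≥0∞) (edist : X2 → X2 → ℝ≥0∞) μ ν = 0)
    (h2 : CWbar p (edist : X1 → X1 → ℝ≥0∞) (edist : X2 → X2 → ℝ≥0∞) ν μ = 0) :
    μ = ν := by
  have := hμ.1
  have := hν.1
  have hμ2 : ∀ᵐ z ∂μ, IsProbabilityMeasure z.2 := hμ.2.1.mono fun z hz => hz.1
  have hν2 : ∀ᵐ z ∂ν, IsProbabilityMeasure z.2 := hν.2.1.mono fun z hz => hz.1
  refine ext_of_exp' μ ν hμ2 hν2 fun G hG F hF => le_antisymm ?_ ?_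
  · exact exp_ineq p hp ν μ hν2 hμ2 h2 G hG F hF
  · exact exp_ineq p hp μ ν hμ2 hν2 h1 G hG F hF

end AWPaper
end
end
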